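/- Let 1 < p < ∞. There exists a constant C > 0, depending only on p, such that for every T > 0, every integer n ≥ 1 and every measurable f : ℝ → ℝ with f integrable on (−T, T): ‖S_n(f·χ_T)‖_{L^p((−T,T))} ≤ C·(1 + T^{17}/√n)·‖S f*‖_{L^p((0,∞))}, where χ_T denotes the indicator function of (−T, T). -/

import Mathlib

open MeasureTheory Filter Set

/-- The `k`-th Hermite function
`h_k(x) = (-1)^k π^{-1/4} 2^{-k/2} (k!)^{-1/2} e^{x²/2} (d^k/dx^k)(e^{-x²})`. -/
noncomputable def hermiteFun (k : ℕ) (x : ℝ) : ℝ :=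
  (-1 : ℝ) ^ k *
    (Real.pi ^ (-(1 : ℝ) / 4) * (2 : ℝ) ^ (-(k : ℝ) / 2) *
      ((k.factorial : ℝ)) ^ (-(1 : ℝ) / 2)) *
    Real.exp (x ^ 2 / 2) * iteratedDeriv k (fun y : ℝ => Real.exp (-y ^ 2)) x

/-- The `n`-th partial sum of the Hermite series of `f`:
`S_n f = ∑_{k=0}^n (∫ f h_k) h_k`. -/
noncomputable def hermitePartialSum (n : ℕ) (f : ℝ → ℝ) (x : ℝ) : ℝ :=
  ∑ k ∈ Finset.range (n + 1), (∫ y : ℝ, f y * hermiteFun k y) * hermiteFun k x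

/-- The Stieltjes transform `Sg(t) = ∫_0^∞ g(s)/(t+s) ds` of a `[0,∞]`-valued function. -/
noncomputable def stieltjesT (g : ℝ → ENNReal) (t : ℝ) : ENNReal :=
  ∫⁻ s in Set.Ioi (0 : ℝ), g s / ENNReal.ofReal (t + s)

/-- The decreasing rearrangement `f*(t) = inf{λ > 0 : |{x : |f(x)| > λ}| ≤ t}`,
with value `∞` when no such `λ` exists. -/
noncomputable def decRearrange (f : ℝ → ℝ) (t : ℝ) : ENNReal :=
  sInf {l : ENNReal | 0 < l ∧ volume {x : ℝ | l < ENNReal.ofReal |f x|} ≤ ENNReal.ofReal t}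

open scoped Topology
/-! ### Recurrences for the Hermite functions -/

lemma hasDerivAt_iteratedDeriv_gaussian (k : ℕ) (x : ℝ) :
    HasDerivAt (iteratedDeriv k (fun y : ℝ => Real.exp (-y ^ 2)))
      (iteratedDeriv (k + 1) (fun y : ℝ => Real.exp (-y ^ 2)) x) x := by
  have hc : ContDiff ℝ (k + 1 : ℕ) (fun y : ℝ => Real.exp (-y ^ 2)) := by fun_prop
  rw [iteratedDeriv_succ]
  exact ((hc.differentiable_iteratedDeriv k (by exact_mod_cast k.lt_succ_self)) x).hasDerivAt

lemma iteratedDeriv_one_gaussian (x : ℝ) :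
    iteratedDeriv 1 (fun y : ℝ => Real.exp (-y ^ 2)) x = -2 * x * Real.exp (-x ^ 2) := by
  rw [iteratedDeriv_one]
  have h : HasDerivAt (fun y : ℝ => -y ^ 2) (-(2 * x)) x := by
    simpa using (hasDerivAt_pow 2 x).fun_neg
  rw [h.exp.deriv]
  ring

lemma iteratedDeriv_gaussian_succ_succ (k : ℕ) (x : ℝ) :
    iteratedDeriv (k + 2) (fun y : ℝ => Real.exp (-y ^ 2)) x =
      -2 * x * iteratedDeriv (k + 1) (fun y : ℝ => Real.exp (-y ^ 2)) x
        - 2 * (k + 1) * iteratedDeriv k (fun y : ℝ => Real.exp (-y ^ 2)) x := by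
  induction k generalizing x with
  | zero =>
    have h1 : iteratedDeriv 1 (fun y : ℝ => Real.exp (-y ^ 2))
        = fun x => -2 * x * iteratedDeriv 0 (fun y : ℝ => Real.exp (-y ^ 2)) x := by
      funext y; rw [iteratedDeriv_one_gaussian, iteratedDeriv_zero]
    have h2 := hasDerivAt_iteratedDeriv_gaussian 1 x
    have h3 := ((hasDerivAt_id x).const_mul (-2)).mul (hasDerivAt_iteratedDeriv_gaussian 0 x)
    have h4 := h2.unique (h3.congr_of_eventuallyEq (by rw [h1]; rfl))
    simp only [id, zero_add, Nat.cast_zero] at h4 ⊢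
    rw [h4]
    ring
  | succ k ih =>
    have h2 := hasDerivAt_iteratedDeriv_gaussian (k + 2) x
    have h3 := (((hasDerivAt_id x).const_mul (-2)).mul
      (hasDerivAt_iteratedDeriv_gaussian (k + 1) x)).sub
      ((hasDerivAt_iteratedDeriv_gaussian k x).const_mul (2 * ((k : ℝ) + 1)))
    have h4 := h2.unique (h3.congr_of_eventuallyEq (Filter.Eventually.of_forall fun y => ih y))
    simp only [id] at h4
    rw [h4]
    push_cast
    ring

/-- The normalising constant of the `k`-th Hermite function. -/
noncomputable def hermiteCoeff (k : ℕ) : ℝ :=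
  (-1 : ℝ) ^ k * (Real.pi ^ (-(1 : ℝ) / 4) * (2 : ℝ) ^ (-(k : ℝ) / 2) *
    ((k.factorial : ℝ)) ^ (-(1 : ℝ) / 2))

lemma hermiteFun_eq (k : ℕ) (x : ℝ) : hermiteFun k x = hermiteCoeff k * Real.exp (x ^ 2 / 2) *
    iteratedDeriv k (fun y : ℝ => Real.exp (-y ^ 2)) x := rfl

lemma hermiteCoeff_succ (k : ℕ) :
    √(2 * (k + 1)) * hermiteCoeff (k + 1) = -hermiteCoeff k := by
  have hk : (0 : ℝ) < k + 1 := by positivity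
  have hf : (0 : ℝ) < k.factorial := by positivity
  have e1 : (2 : ℝ) ^ (-((k + 1 : ℕ) : ℝ) / 2) = 2 ^ (-(k : ℝ) / 2) * 2 ^ (-(1 : ℝ) / 2) := by
    rw [← Real.rpow_add two_pos]; congr 1; push_cast; ring
  have e2 : (((k + 1).factorial : ℕ) : ℝ) ^ (-(1 : ℝ) / 2)
      = (k + 1 : ℝ) ^ (-(1 : ℝ) / 2) * (k.factorial : ℝ) ^ (-(1 : ℝ) / 2) := by
    rw [Nat.factorial_succ]; push_cast
    rw [Real.mul_rpow hk.le hf.le]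
  have e3 : √(2 * (k + 1 : ℝ)) * (2 ^ (-(1 : ℝ) / 2) * (k + 1 : ℝ) ^ (-(1 : ℝ) / 2)) = 1 := by
    rw [← Real.mul_rpow two_pos.le hk.le, Real.sqrt_eq_rpow, ← Real.rpow_add (by positivity)]
    norm_num
  unfold hermiteCoeff
  rw [e1, e2, pow_succ]
  linear_combination (-(-1 : ℝ) ^ k * (Real.pi ^ (-(1 : ℝ) / 4) * (2 : ℝ) ^ (-(k : ℝ) / 2) *
    ((k.factorial : ℝ)) ^ (-(1 : ℝ) / 2))) * e3

lemma hermiteFun_zero (x : ℝ) :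
    hermiteFun 0 x = Real.pi ^ (-(1 : ℝ) / 4) * Real.exp (-x ^ 2 / 2) := by
  have : Real.exp (-x ^ 2 / 2) = Real.exp (x ^ 2 / 2) * Real.exp (-x ^ 2) := by
    rw [← Real.exp_add]; congr 1; ring
  rw [this]
  simp [hermiteFun, mul_assoc]

lemma hermiteFun_one (x : ℝ) : hermiteFun 1 x = √2 * (x * hermiteFun 0 x) := by
  have h := hermiteCoeff_succ 0
  have h2 : √2 * √2 = (2 : ℝ) := Real.mul_self_sqrt two_pos.le
  simp only [Nat.cast_zero, zero_add, mul_one] at h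
  rw [hermiteFun_eq, hermiteFun_eq, iteratedDeriv_one_gaussian, iteratedDeriv_zero]
  linear_combination -√2 * (x * Real.exp (x ^ 2 / 2) * Real.exp (-x ^ 2)) * h +
    (x * Real.exp (x ^ 2 / 2) * Real.exp (-x ^ 2)) * hermiteCoeff 1 * h2

lemma hermiteFun_succ_succ (k : ℕ) (x : ℝ) :
    √(2 * (k + 2)) * hermiteFun (k + 2) x =
      2 * x * hermiteFun (k + 1) x - √(2 * (k + 1)) * hermiteFun k x := by
  have h1 := hermiteCoeff_succ k
  have h2 := hermiteCoeff_succ (k + 1)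
  have h3 : √(2 * (k + 1)) * √(2 * (k + 1)) = (2 * (k + 1) : ℝ) :=
    Real.mul_self_sqrt (by positivity)
  push_cast at h2
  rw [show (k : ℝ) + 1 + 1 = k + 2 by ring] at h2
  rw [hermiteFun_eq, hermiteFun_eq, hermiteFun_eq, iteratedDeriv_gaussian_succ_succ]
  set a := iteratedDeriv (k + 1) (fun y : ℝ => Real.exp (-y ^ 2)) x
  set b := iteratedDeriv k (fun y : ℝ => Real.exp (-y ^ 2)) x
  set e := Real.exp (x ^ 2 / 2)
  linear_combination e * (-2 * x * a - 2 * (k + 1) * b) * h2 +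
    e * b * √(2 * (k + 1)) * h1 - e * b * hermiteCoeff (k + 1) * h3

lemma hasDerivAt_hermiteFun (k : ℕ) (x : ℝ) :
    HasDerivAt (hermiteFun k)
      (x * hermiteFun k x - √(2 * (k + 1)) * hermiteFun (k + 1) x) x := by
  have h1 : HasDerivAt (fun x : ℝ => x ^ 2 / 2) x x := by
    simpa using (hasDerivAt_pow 2 x).div_const 2
  have h2 := (h1.exp.const_mul (hermiteCoeff k)).mul (hasDerivAt_iteratedDeriv_gaussian k x)
  refine (h2.congr_of_eventuallyEq (Filter.Eventually.of_forall fun y => hermiteFun_eq k y)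
    ).congr_deriv ?_
  rw [hermiteFun_eq, hermiteFun_eq]
  linear_combination (Real.exp (x ^ 2 / 2) *
    iteratedDeriv (k + 1) (fun y : ℝ => Real.exp (-y ^ 2)) x) * hermiteCoeff_succ k

lemma continuous_hermiteFun (k : ℕ) : Continuous (hermiteFun k) :=
  continuous_iff_continuousAt.2 fun x => (hasDerivAt_hermiteFun k x).continuousAt

lemma hasDerivAt_hermiteFun_succ (k : ℕ) (x : ℝ) :
    HasDerivAt (hermiteFun (k + 1))
      (√(2 * (k + 1)) * hermiteFun k x - x * hermiteFun (k + 1) x) x := by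
  refine (hasDerivAt_hermiteFun (k + 1) x).congr_deriv ?_
  have h := hermiteFun_succ_succ k x
  push_cast
  rw [show (k : ℝ) + 1 + 1 = k + 2 by ring]
  linear_combination -h

/-- The derivative of the `k`-th Hermite function. -/
noncomputable def hermiteFunDeriv (k : ℕ) (x : ℝ) : ℝ :=
  x * hermiteFun k x - √(2 * (k + 1)) * hermiteFun (k + 1) x

lemma hasDerivAt_hermiteFunDeriv (k : ℕ) (x : ℝ) :
    HasDerivAt (hermiteFunDeriv k) ((x ^ 2 - (2 * k + 1)) * hermiteFun k x) x := by
  have h := ((hasDerivAt_id x).mul (hasDerivAt_hermiteFun k x)).sub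
    ((hasDerivAt_hermiteFun_succ k x).const_mul √(2 * (k + 1)))
  refine HasDerivAt.congr_deriv h ?_
  have h3 : √(2 * (k + 1)) * √(2 * (k + 1)) = (2 * (k + 1) : ℝ) :=
    Real.mul_self_sqrt (by positivity)
  simp only [id]
  linear_combination -hermiteFun k x * h3

lemma tendsto_pow_mul_hermiteFun (k m : ℕ) :
    Tendsto (fun x => x ^ m * hermiteFun k x) (cocompact ℝ) (𝓝 0) := by
  induction k using Nat.twoStepInduction generalizing m with
  | zero =>
    have h := (tendsto_rpow_abs_mul_exp_neg_mul_sq_cocompact (a := 1 / 2) (by norm_num) m).const_mul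
      (Real.pi ^ (-(1 : ℝ) / 4))
    rw [mul_zero] at h
    refine squeeze_zero_norm (fun x => le_of_eq ?_) h
    rw [hermiteFun_zero, norm_mul, norm_pow, norm_mul, Real.rpow_natCast]
    simp only [Real.norm_eq_abs, Real.abs_exp]
    rw [abs_of_pos (by positivity : 0 < Real.pi ^ (-(1 : ℝ) / 4)),
      show -x ^ 2 / 2 = -(1 / 2) * x ^ 2 by ring]
    ring
  | one =>
    have h := (tendsto_rpow_abs_mul_exp_neg_mul_sq_cocompact (a := 1 / 2) (by norm_num)
      (m + 1 : ℕ)).const_mul (√2 * Real.pi ^ (-(1 : ℝ) / 4))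
    rw [mul_zero] at h
    refine squeeze_zero_norm (fun x => le_of_eq ?_) h
    rw [hermiteFun_one, hermiteFun_zero, norm_mul, norm_pow, norm_mul, norm_mul, norm_mul,
      Real.rpow_natCast]
    simp only [Real.norm_eq_abs, Real.abs_exp]
    rw [abs_of_pos (by positivity : 0 < Real.pi ^ (-(1 : ℝ) / 4)),
      abs_of_pos (by positivity : 0 < √(2 : ℝ)),
      show -x ^ 2 / 2 = -(1 / 2) * x ^ 2 by ring]
    ring
  | more k ih0 ih1 =>
    have h := (((ih1 (m + 1)).const_mul 2).sub ((ih0 m).const_mul √(2 * (k + 1)))).const_mul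
      (√(2 * (k + 2)))⁻¹
    simp only [mul_zero, sub_zero] at h
    refine h.congr fun x => ?_
    have hpos : (0 : ℝ) < √(2 * (k + 2)) := by positivity
    rw [inv_mul_eq_iff_eq_mul₀ hpos.ne']
    linear_combination -x ^ m * hermiteFun_succ_succ k x

lemma tendsto_hermiteFunDeriv (k : ℕ) : Tendsto (hermiteFunDeriv k) (cocompact ℝ) (𝓝 0) := by
  have h := (tendsto_pow_mul_hermiteFun k 1).sub
    ((tendsto_pow_mul_hermiteFun (k + 1) 0).const_mul √(2 * (k + 1)))
  simp only [mul_zero, sub_zero, pow_one, pow_zero, one_mul] at h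
  exact h

lemma hermiteFun_apply_zero_sq_le (k : ℕ) : hermiteFun k 0 ^ 2 ≤ 1 / √(k + 1) := by
  induction k using Nat.twoStepInduction with
  | zero =>
    rw [hermiteFun_zero]
    have : Real.pi ^ (-(1 : ℝ) / 4) ≤ 1 :=
      Real.rpow_le_one_of_one_le_of_nonpos (by linarith [Real.pi_gt_three]) (by norm_num)
    have h0 : 0 < Real.pi ^ (-(1 : ℝ) / 4) := by positivity
    simp
    rw [abs_of_pos h0]
    exact this
  | one =>
    rw [hermiteFun_one]
    simp
  | more k ih0 ih1 =>
    have h := hermiteFun_succ_succ k 0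
    have h2 : (2 * (k + 2)) * hermiteFun (k + 2) 0 ^ 2 = (2 * (k + 1)) * hermiteFun k 0 ^ 2 := by
      have h3 : √(2 * (k + 1)) ^ 2 = (2 * (k + 1) : ℝ) := Real.sq_sqrt (by positivity)
      have h4 : √(2 * (k + 2)) ^ 2 = (2 * (k + 2) : ℝ) := Real.sq_sqrt (by positivity)
      rw [← h3, ← h4, ← mul_pow, ← mul_pow, h]
      ring
    have h5 : hermiteFun (k + 2) 0 ^ 2 = (k + 1) / (k + 2) * hermiteFun k 0 ^ 2 := by
      field_simp
      linarith
    rw [h5]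
    refine (mul_le_mul_of_nonneg_left ih0 (by positivity)).trans ?_
    push_cast
    rw [div_mul_div_comm, mul_one, div_le_div_iff₀ (by positivity) (by positivity), one_mul]
    have h6 : √((k : ℝ) + 1) * √((k : ℝ) + 2 + 1) ≤ k + 2 := by
      rw [← Real.sqrt_mul (by positivity)]
      exact Real.sqrt_le_iff.2 ⟨by positivity, by nlinarith⟩
    have h7 : √((k : ℝ) + 1) * √((k : ℝ) + 1) = k + 1 := Real.mul_self_sqrt (by positivity)
    have h8 : 0 ≤ √((k : ℝ) + 1) := by positivity
    calc ((k : ℝ) + 1) * √((k : ℝ) + 2 + 1)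
        = √((k : ℝ) + 1) * (√((k : ℝ) + 1) * √((k : ℝ) + 2 + 1)) := by rw [← mul_assoc, h7]
      _ ≤ √((k : ℝ) + 1) * (k + 2) := by gcongr
      _ = _ := by ring

lemma hermite_christoffelDarboux (n : ℕ) (x y : ℝ) :
    (x - y) * ∑ k ∈ Finset.range (n + 1), hermiteFun k x * hermiteFun k y =
      √(2 * (n + 1)) / 2 *
        (hermiteFun (n + 1) x * hermiteFun n y - hermiteFun n x * hermiteFun (n + 1) y) := by
  induction n with
  | zero =>
    have h2 : √2 * √2 = (2 : ℝ) := Real.mul_self_sqrt two_pos.le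
    simp only [zero_add, Finset.range_one, Finset.sum_singleton, hermiteFun_one, Nat.cast_zero,
      mul_one]
    linear_combination -(x - y) * hermiteFun 0 x * hermiteFun 0 y / 2 * h2
  | succ n ih =>
    rw [Finset.sum_range_succ, mul_add, ih]
    have hx := hermiteFun_succ_succ n x
    have hy := hermiteFun_succ_succ n y
    push_cast
    rw [show (n : ℝ) + 1 + 1 = n + 2 by ring]
    linear_combination -hermiteFun (n + 1) y / 2 * hx + hermiteFun (n + 1) x / 2 * hy

/-! ### Pointwise bounds -/

lemma oscillator_energy_le {φ ψ : ℝ → ℝ} {N : ℝ} (h1 : ∀ x, HasDerivAt φ (ψ x) x)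
    (h2 : ∀ x, HasDerivAt ψ ((x ^ 2 - N) * φ x) x) {x : ℝ} (hx : 0 ≤ x) :
    (N - x ^ 2) * φ x ^ 2 + ψ x ^ 2 ≤ N * φ 0 ^ 2 + ψ 0 ^ 2 := by
  have hd : ∀ x, HasDerivAt (fun x => (N - x ^ 2) * φ x ^ 2 + ψ x ^ 2) (-2 * x * φ x ^ 2) x := by
    intro x
    have ha : HasDerivAt (fun x : ℝ => N - x ^ 2) (-(2 * x)) x := by
      simpa using (hasDerivAt_pow 2 x).const_sub N
    have hb : HasDerivAt (fun x => φ x ^ 2) (2 * φ x * ψ x) x := by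
      simpa using (h1 x).fun_pow 2
    have hc : HasDerivAt (fun x => ψ x ^ 2) (2 * ψ x * ((x ^ 2 - N) * φ x)) x := by
      simpa using (h2 x).fun_pow 2
    refine ((ha.fun_mul hb).fun_add hc).congr_deriv ?_
    ring
  have hanti : AntitoneOn (fun x => (N - x ^ 2) * φ x ^ 2 + ψ x ^ 2) (Ici 0) := by
    refine antitoneOn_of_deriv_nonpos (convex_Ici 0)
      (fun x _ => (hd x).continuousAt.continuousWithinAt)
      (fun x _ => (hd x).differentiableAt.differentiableWithinAt) fun x hx => ?_
    rw [interior_Ici] at hx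
    rw [(hd x).deriv]
    have : 0 < x := hx
    have : 0 ≤ x * φ x ^ 2 := by positivity
    linarith
  simpa using hanti (mem_Ici.2 le_rfl) (mem_Ici.2 hx) hx

lemma oscillator_abs_le_abs_turning {φ ψ : ℝ → ℝ} {r : ℝ} (hr : 0 ≤ r)
    (h1 : ∀ x, HasDerivAt φ (ψ x) x) (h2 : ∀ x, HasDerivAt ψ ((x ^ 2 - r ^ 2) * φ x) x)
    (l1 : Tendsto φ atTop (𝓝 0)) (l2 : Tendsto ψ atTop (𝓝 0)) {x : ℝ} (hx : r ≤ x) :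
    |φ x| ≤ |φ r| := by
  have hd : ∀ x, HasDerivAt (fun x => φ x * ψ x) (ψ x ^ 2 + (x ^ 2 - r ^ 2) * φ x ^ 2) x :=
    fun x => ((h1 x).fun_mul (h2 x)).congr_deriv (by ring)
  have hmono : MonotoneOn (fun x => φ x * ψ x) (Ici r) := by
    refine monotoneOn_of_deriv_nonneg (convex_Ici r)
      (fun x _ => (hd x).continuousAt.continuousWithinAt)
      (fun x _ => (hd x).differentiableAt.differentiableWithinAt) fun x hx => ?_
    rw [interior_Ici] at hx
    rw [(hd x).deriv]
    have : r < x := hx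
    have : 0 ≤ x ^ 2 - r ^ 2 := by nlinarith
    positivity
  have hneg : ∀ x, r ≤ x → φ x * ψ x ≤ 0 := by
    intro x hx
    have hl : Tendsto (fun x => φ x * ψ x) atTop (𝓝 0) := by simpa using l1.mul l2
    refine ge_of_tendsto hl ?_
    filter_upwards [eventually_ge_atTop x] with y hy
    exact hmono (mem_Ici.2 hx) (mem_Ici.2 (hx.trans hy)) hy
  have hsq : ∀ x, HasDerivAt (fun x => φ x ^ 2) (2 * φ x * ψ x) x := fun x => by
    simpa using (h1 x).fun_pow 2
  have hanti : AntitoneOn (fun x => φ x ^ 2) (Ici r) := by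
    refine antitoneOn_of_deriv_nonpos (convex_Ici r)
      (fun x _ => (hsq x).continuousAt.continuousWithinAt)
      (fun x _ => (hsq x).differentiableAt.differentiableWithinAt) fun x hx => ?_
    rw [interior_Ici] at hx
    rw [(hsq x).deriv]
    linarith [hneg x (le_of_lt hx)]
  exact sq_le_sq.1 (hanti (mem_Ici.2 le_rfl) (mem_Ici.2 hx) hx)

lemma oscillator_abs_le {φ ψ : ℝ → ℝ} {r : ℝ} (hr : 0 ≤ r)
    (h1 : ∀ x, HasDerivAt φ (ψ x) x) (h2 : ∀ x, HasDerivAt ψ ((x ^ 2 - r ^ 2) * φ x) x)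
    (l1 : Tendsto φ atTop (𝓝 0)) (l2 : Tendsto ψ atTop (𝓝 0)) {x : ℝ} (hx : 0 ≤ x) :
    |φ x| ≤ |φ 0| + r * √(r ^ 2 * φ 0 ^ 2 + ψ 0 ^ 2) := by
  have hin : ∀ y ∈ Icc 0 r, |φ y| ≤ |φ 0| + r * √(r ^ 2 * φ 0 ^ 2 + ψ 0 ^ 2) := by
    intro y hy
    have hb : ∀ z ∈ Icc 0 r, ‖ψ z‖ ≤ √(r ^ 2 * φ 0 ^ 2 + ψ 0 ^ 2) := fun z hz => by
      rw [Real.norm_eq_abs]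
      refine Real.abs_le_sqrt ?_
      have := oscillator_energy_le h1 h2 hz.1
      have : 0 ≤ (r ^ 2 - z ^ 2) * φ z ^ 2 :=
        mul_nonneg (by nlinarith [hz.1, hz.2]) (sq_nonneg _)
      linarith
    have hm := (convex_Icc 0 r).norm_image_sub_le_of_norm_hasDerivWithin_le
      (fun z _ => (h1 z).hasDerivWithinAt) hb (left_mem_Icc.2 hr) hy
    rw [Real.norm_eq_abs, Real.norm_eq_abs, sub_zero, abs_of_nonneg hy.1] at hm
    have h3 : |φ y| ≤ |φ 0| + |φ y - φ 0| := by
      have := abs_add_le (φ 0) (φ y - φ 0)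
      rwa [add_sub_cancel] at this
    have h4 : √(r ^ 2 * φ 0 ^ 2 + ψ 0 ^ 2) * y ≤ r * √(r ^ 2 * φ 0 ^ 2 + ψ 0 ^ 2) := by
      rw [mul_comm]
      exact mul_le_mul_of_nonneg_right hy.2 (Real.sqrt_nonneg _)
    linarith
  rcases le_total x r with h | h
  · exact hin x ⟨hx, h⟩
  · exact (oscillator_abs_le_abs_turning hr h1 h2 l1 l2 h).trans (hin r ⟨hr, le_rfl⟩)

lemma hermiteFun_energy_zero_le (k : ℕ) :
    (2 * k + 1) * hermiteFun k 0 ^ 2 + hermiteFunDeriv k 0 ^ 2 ≤ 4 * √(k + 1) := by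
  have h1 := hermiteFun_apply_zero_sq_le k
  have h2 := hermiteFun_apply_zero_sq_le (k + 1)
  have h3 : hermiteFunDeriv k 0 ^ 2 = 2 * (k + 1) * hermiteFun (k + 1) 0 ^ 2 := by
    have h3 : √(2 * (k + 1)) ^ 2 = (2 * (k + 1) : ℝ) := Real.sq_sqrt (by positivity)
    rw [hermiteFunDeriv, zero_mul, zero_sub, neg_sq, mul_pow, h3]
  have h4 : 1 / √(((k + 1 : ℕ) : ℝ) + 1) ≤ 1 / √((k : ℝ) + 1) := by
    apply one_div_le_one_div_of_le (by positivity)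
    apply Real.sqrt_le_sqrt
    push_cast
    linarith
  have h5 : ((k : ℝ) + 1) * (1 / √((k : ℝ) + 1)) = √((k : ℝ) + 1) := by
    rw [mul_one_div, Real.div_sqrt]
  have h6 : (0 : ℝ) ≤ k + 1 := by positivity
  have h7 := mul_le_mul_of_nonneg_left h1 h6
  have h8 := mul_le_mul_of_nonneg_left (h2.trans h4) h6
  rw [h5] at h7 h8
  rw [h3]
  nlinarith [sq_nonneg (hermiteFun k 0)]

lemma hermiteFun_neg_system (k : ℕ) :
    (∀ x, HasDerivAt (fun x => hermiteFun k (-x)) (-hermiteFunDeriv k (-x)) x) ∧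
    (∀ x, HasDerivAt (fun x => -hermiteFunDeriv k (-x))
      ((x ^ 2 - (2 * k + 1)) * hermiteFun k (-x)) x) := by
  refine ⟨fun x => ?_, fun x => ?_⟩
  · have := (hasDerivAt_hermiteFun k (-x)).comp x (hasDerivAt_neg x)
    refine this.congr_deriv ?_
    rw [hermiteFunDeriv]; ring
  · have := ((hasDerivAt_hermiteFunDeriv k (-x)).comp x (hasDerivAt_neg x)).neg
    refine this.congr_deriv ?_
    ring

lemma hermiteFun_sq_le (k : ℕ) (x : ℝ) :
    (2 * k + 1 - x ^ 2) * hermiteFun k x ^ 2 ≤ 4 * √(k + 1) := by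
  have h0 := hermiteFun_energy_zero_le k
  rcases le_total 0 x with hx | hx
  · have := oscillator_energy_le (hasDerivAt_hermiteFun k) (hasDerivAt_hermiteFunDeriv k) hx
    change _ ≤ _ + hermiteFunDeriv k 0 ^ 2 at this
    nlinarith [sq_nonneg (x * hermiteFun k x - √(2 * (k + 1)) * hermiteFun (k + 1) x)]
  · have := oscillator_energy_le (hermiteFun_neg_system k).1 (hermiteFun_neg_system k).2
      (neg_nonneg.2 hx)
    simp only [neg_neg, neg_zero, neg_sq] at this
    nlinarith [sq_nonneg (hermiteFunDeriv k x)]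

lemma abs_hermiteFun_le (k : ℕ) (x : ℝ) : |hermiteFun k x| ≤ 5 * (k + 1) := by
  have h0 := hermiteFun_energy_zero_le k
  have hr : √(2 * k + 1 : ℝ) ^ 2 = 2 * k + 1 := Real.sq_sqrt (by positivity)
  have hkey : |hermiteFun k x| ≤ |hermiteFun k 0| + √(2 * k + 1 : ℝ) *
      √(√(2 * k + 1 : ℝ) ^ 2 * hermiteFun k 0 ^ 2 + hermiteFunDeriv k 0 ^ 2) := by
    have l1 : Tendsto (hermiteFun k) (cocompact ℝ) (𝓝 0) := by
      simpa using tendsto_pow_mul_hermiteFun k 0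
    have l2 := tendsto_hermiteFunDeriv k
    have e := hasDerivAt_hermiteFunDeriv k
    have e' := (hermiteFun_neg_system k).2
    rw [← hr] at e e'
    rcases le_total 0 x with hx | hx
    · exact oscillator_abs_le (Real.sqrt_nonneg _) (hasDerivAt_hermiteFun k) e
        (l1.mono_left atTop_le_cocompact) (l2.mono_left atTop_le_cocompact) hx
    · have := oscillator_abs_le (Real.sqrt_nonneg _) (hermiteFun_neg_system k).1 e'
        ((l1.mono_left atBot_le_cocompact).comp tendsto_neg_atTop_atBot)
        (by simpa using ((l2.mono_left atBot_le_cocompact).comp tendsto_neg_atTop_atBot).neg)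
        (neg_nonneg.2 hx)
      simpa only [neg_neg, neg_zero, neg_sq] using this
  rw [hr] at hkey
  have hk : (1 : ℝ) ≤ k + 1 := by simp
  have hs : √((k : ℝ) + 1) ≤ k + 1 := Real.sqrt_le_iff.2 ⟨by positivity, by nlinarith⟩
  have h1 : |hermiteFun k 0| ≤ 1 := by
    rw [← sq_le_one_iff_abs_le_one]
    refine (hermiteFun_apply_zero_sq_le k).trans ?_
    exact div_le_one_of_le₀ (Real.one_le_sqrt.2 hk) (Real.sqrt_nonneg _)
  have h2 : √(2 * k + 1 : ℝ) *
      √((2 * k + 1 : ℝ) * hermiteFun k 0 ^ 2 + hermiteFunDeriv k 0 ^ 2) ≤ 4 * (k + 1) := by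
    rw [← Real.sqrt_mul (by positivity)]
    refine Real.sqrt_le_iff.2 ⟨by positivity, ?_⟩
    nlinarith
  linarith

lemma exists_hermiteFun_bounds (T : ℝ) (hT : 0 < T) (n : ℕ) (hn : 1 ≤ n) :
    ∃ a b : ℝ, 0 ≤ a ∧ 0 ≤ b ∧ (∀ x ∈ Ioo (-T) T, |hermiteFun n x| ≤ a) ∧
      (∀ x ∈ Ioo (-T) T, |hermiteFun (n + 1) x| ≤ b) ∧
      √(2 * (n + 1)) / 2 * (a * b) ≤ 1000 * (1 + T ^ 17 / √n) := by
  have hn' : (1 : ℝ) ≤ n := by exact_mod_cast hn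
  have hT17 : 0 ≤ T ^ 17 / √n := by positivity
  rcases le_total (T ^ 2) n with h | h
  · have key : ∀ k : ℕ, n ≤ k → k ≤ n + 1 → ∀ x ∈ Ioo (-T) T,
        |hermiteFun k x| ≤ √(4 * √(n + 2) / (n + 1)) := by
      intro k hk hk' x hx
      refine Real.abs_le_sqrt ?_
      rw [le_div_iff₀ (by positivity)]
      have h1 := hermiteFun_sq_le k x
      have hk1 : (n : ℝ) ≤ k := by exact_mod_cast hk
      have hk2 : (k : ℝ) ≤ n + 1 := by exact_mod_cast hk'
      have h2 : √((k : ℝ) + 1) ≤ √(n + 2) := Real.sqrt_le_sqrt (by linarith)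
      have h3 : x ^ 2 ≤ n := by
        have := abs_lt.2 hx
        have := sq_le_sq' hx.1.le hx.2.le
        linarith
      nlinarith [sq_nonneg (hermiteFun k x)]
    refine ⟨_, _, Real.sqrt_nonneg _, Real.sqrt_nonneg _, key n le_rfl (by omega),
      key (n + 1) (by omega) le_rfl, ?_⟩
    rw [Real.mul_self_sqrt (by positivity)]
    have h5 : √(2 * ((n : ℝ) + 1)) * √(n + 2) ≤ 2 * (n + 1) := by
      rw [← Real.sqrt_mul (by positivity)]
      exact Real.sqrt_le_iff.2 ⟨by positivity, by nlinarith⟩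
    have h6 : √(2 * ((n : ℝ) + 1)) / 2 * (4 * √(n + 2) / (n + 1)) ≤ 4 := by
      rw [div_mul_div_comm, div_le_iff₀ (by positivity)]
      nlinarith
    linarith
  · refine ⟨5 * (n + 1), 5 * ((n + 1 : ℕ) + 1), by positivity, by positivity,
      fun x _ => abs_hermiteFun_le n x, fun x _ => abs_hermiteFun_le (n + 1) x, ?_⟩
    push_cast
    have h1 : √(2 * ((n : ℝ) + 1)) ≤ 2 * (2 * n) := by
      refine Real.sqrt_le_iff.2 ⟨by positivity, by nlinarith⟩
    have hT1 : 1 ≤ T := by nlinarith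
    have h2 : (n : ℝ) ^ 3 ≤ T ^ 17 / √n := by
      rw [le_div_iff₀ (by positivity)]
      calc (n : ℝ) ^ 3 * √n ≤ (n : ℝ) ^ 3 * n := by gcongr; exact Real.sqrt_le_iff.2 ⟨by positivity, by nlinarith⟩
        _ = (n : ℝ) ^ 4 := by ring
        _ ≤ (T ^ 2) ^ 4 := by gcongr
        _ = T ^ 8 := by ring
        _ ≤ T ^ 17 := pow_le_pow_right₀ hT1 (by norm_num)
    calc √(2 * ((n : ℝ) + 1)) / 2 * (5 * (n + 1) * (5 * (n + 1 + 1)))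
        ≤ 2 * (2 * n) / 2 * (5 * (n + n) * (5 * (n + n + n))) := by gcongr
      _ = 300 * n ^ 3 := by ring
      _ ≤ 1000 * (1 + T ^ 17 / √n) := by linarith

/-! ### The truncated Hilbert transform -/

lemma exists_abs_im_rpow_le {p : ℝ} (hp : 1 < p) (hp2 : p ≤ 2) :
    ∃ A B : ℝ, 0 ≤ A ∧ 0 ≤ B ∧ ∀ z : ℂ, 0 < z.re →
      |z.im| ^ p ≤ A * z.re ^ p - B * (z ^ (p : ℂ)).re := by
  have hp0 : 0 < p := by linarith
  have hpi := Real.pi_pos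
  set θ₀ := (Real.pi / (2 * p) + Real.pi / 2) / 2 with hθ₀
  have hlt : Real.pi / (2 * p) < Real.pi / 2 := by
    apply div_lt_div_of_pos_left hpi two_pos; linarith
  have hq : 0 < Real.pi / (2 * p) := by positivity
  have h1 : θ₀ < Real.pi / 2 := by linarith
  have h0 : 0 < θ₀ := by linarith
  have h2 : θ₀ * p = (Real.pi / 2 + p * Real.pi / 2) / 2 := by
    rw [hθ₀]; field_simp
  have h3 : Real.pi / 2 < θ₀ * p := by rw [h2]; nlinarith
  have h4 : θ₀ * p ≤ Real.pi := by rw [h2]; nlinarith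
  have hc : Real.cos (θ₀ * p) < 0 := Real.cos_neg_of_pi_div_two_lt_of_lt h3 (by linarith)
  have hs : 0 < Real.cos θ₀ := Real.cos_pos_of_mem_Ioo ⟨by linarith, h1⟩
  set c := -Real.cos (θ₀ * p) with hcdef
  have hc' : 0 < c := by linarith
  refine ⟨(1 + 1 / c) / Real.cos θ₀ ^ p, 1 / c, by positivity, by positivity, fun z hz => ?_⟩
  have harg : |z.arg| < Real.pi / 2 := Complex.abs_arg_lt_pi_div_two_iff.2 (Or.inl hz)
  have him : |z.im| ^ p ≤ ‖z‖ ^ p :=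
    Real.rpow_le_rpow (abs_nonneg _) (Complex.abs_im_le_norm z) hp0.le
  have hnn : 0 ≤ ‖z‖ ^ p := by positivity
  rw [Complex.cpow_ofReal_re]
  rcases le_total θ₀ |z.arg| with h | h
  · have h5 : Real.cos (z.arg * p) ≤ -c := by
      rw [← Real.cos_abs (z.arg * p), abs_mul, abs_of_pos hp0, hcdef, neg_neg]
      apply Real.cos_le_cos_of_nonneg_of_le_pi (by positivity) _ (by gcongr)
      nlinarith
    have h6 : 0 ≤ (1 + 1 / c) / Real.cos θ₀ ^ p * z.re ^ p := by positivity
    have h7 : ‖z‖ ^ p * Real.cos (z.arg * p) ≤ ‖z‖ ^ p * -c := by gcongr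
    have h8 : 1 / c * (‖z‖ ^ p * Real.cos (z.arg * p)) ≤ 1 / c * (‖z‖ ^ p * -c) := by gcongr
    have h9 : 1 / c * (‖z‖ ^ p * -c) = -‖z‖ ^ p := by field_simp
    linarith
  · have h5 : Real.cos θ₀ ≤ Real.cos z.arg := by
      rw [← Real.cos_abs z.arg]
      exact Real.cos_le_cos_of_nonneg_of_le_pi (abs_nonneg _) (by linarith) h
    have h6 : ‖z‖ * Real.cos θ₀ ≤ z.re := by
      rw [← Complex.norm_mul_cos_arg z]
      gcongr
    have h7 : ‖z‖ ^ p * Real.cos θ₀ ^ p ≤ z.re ^ p := by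
      rw [← Real.mul_rpow (norm_nonneg _) hs.le]
      exact Real.rpow_le_rpow (by positivity) h6 hp0.le
    have h8 : (1 + 1 / c) * ‖z‖ ^ p ≤ (1 + 1 / c) / Real.cos θ₀ ^ p * z.re ^ p := by
      rw [div_mul_eq_mul_div, le_div_iff₀ (by positivity), mul_assoc]
      gcongr
    have h9 : 1 / c * (‖z‖ ^ p * Real.cos (z.arg * p)) ≤ 1 / c * (‖z‖ ^ p * 1) := by
      gcongr
      exact Real.cos_le_one _
    linarith

/-- The Cauchy transform `∫ g(t) i/(z-t) dt`. -/
noncomputable def cauchyTransform (g : ℝ → ℝ) (z : ℂ) : ℂ :=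
  ∫ t : ℝ, (g t : ℂ) * (Complex.I / (z - t))

/-- The (unnormalised) Poisson integral of `g` at height `ε`. -/
noncomputable def poissonInt (ε : ℝ) (g : ℝ → ℝ) (x : ℝ) : ℝ :=
  ∫ t : ℝ, g t * (ε / ((x - t) ^ 2 + ε ^ 2))

/-- The (unnormalised) conjugate Poisson integral of `g` at height `ε`. -/
noncomputable def conjPoissonInt (ε : ℝ) (g : ℝ → ℝ) (x : ℝ) : ℝ :=
  ∫ t : ℝ, g t * ((x - t) / ((x - t) ^ 2 + ε ^ 2))

lemma im_le_norm_sub_ofReal (z : ℂ) (t : ℝ) : z.im ≤ ‖z - t‖ := by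
  have := Complex.abs_im_le_norm (z - t)
  simp only [Complex.sub_im, Complex.ofReal_im, sub_zero] at this
  exact (le_abs_self _).trans this

lemma integrable_cauchyKernel {g : ℝ → ℝ} (hg : Integrable g) {z : ℂ} (hz : 0 < z.im) :
    Integrable fun t : ℝ => (g t : ℂ) * (Complex.I / (z - t)) := by
  refine hg.ofReal.mul_bdd (c := 1 / z.im) ?_ (Filter.Eventually.of_forall fun t => ?_)
  · exact Measurable.aestronglyMeasurable (by fun_prop)
  · rw [norm_div, Complex.norm_I]
    exact one_div_le_one_div_of_le hz (im_le_norm_sub_ofReal z t)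

lemma cauchyKernel_eq (g : ℝ → ℝ) (x t : ℝ) {ε : ℝ} (hε : 0 < ε) :
    (g t : ℂ) * (Complex.I / ((x + ε * Complex.I) - t)) =
      ((g t * (ε / ((x - t) ^ 2 + ε ^ 2)) : ℝ) : ℂ) +
        ((g t * ((x - t) / ((x - t) ^ 2 + ε ^ 2)) : ℝ) : ℂ) * Complex.I := by
  have h1 : ((x : ℂ) - t) ^ 2 + (ε : ℂ) ^ 2 ≠ 0 := by
    have : (x - t) ^ 2 + ε ^ 2 ≠ 0 := by positivity
    exact_mod_cast this
  have h2 : (x + ε * Complex.I) - t ≠ 0 := by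
    intro h
    have := congrArg Complex.im h
    simp at this
    exact hε.ne' this
  have h3 : Complex.I / ((x + ε * Complex.I) - t) =
      (ε + (x - t) * Complex.I) / (((x : ℂ) - t) ^ 2 + (ε : ℂ) ^ 2) := by
    rw [div_eq_div_iff h2 h1]
    linear_combination -((x : ℂ) - t) * ε * Complex.I_sq
  rw [h3]
  push_cast
  ring

lemma cauchyTransform_re_im {g : ℝ → ℝ} (hg : Integrable g) (x : ℝ) {ε : ℝ} (hε : 0 < ε) :
    (cauchyTransform g (x + ε * Complex.I)).re = poissonInt ε g x ∧
      (cauchyTransform g (x + ε * Complex.I)).im = conjPoissonInt ε g x := by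
  have hi := integrable_cauchyKernel hg (z := x + ε * Complex.I) (by simpa using hε)
  have h1 := Complex.reCLM.integral_comp_comm hi
  have h2 := Complex.imCLM.integral_comp_comm hi
  refine ⟨?_, ?_⟩
  · refine h1.symm.trans (integral_congr_ae (Filter.Eventually.of_forall fun t => ?_))
    simp only [Complex.reCLM_apply]
    rw [cauchyKernel_eq g x t hε]
    simp only [Complex.add_re, Complex.ofReal_re, Complex.mul_I_re, Complex.ofReal_im, neg_zero,
      add_zero]
  · refine h2.symm.trans (integral_congr_ae (Filter.Eventually.of_forall fun t => ?_))
    simp only [Complex.imCLM_apply]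
    rw [cauchyKernel_eq g x t hε]
    simp only [Complex.add_im, Complex.ofReal_re, Complex.mul_I_im, Complex.ofReal_im, zero_add]

lemma norm_cauchyTransform_le {g : ℝ → ℝ} (hg : Integrable g) {z : ℂ} {d : ℝ} (hd : 0 < d)
    (h : ∀ t, g t ≠ 0 → d ≤ ‖z - t‖) : ‖cauchyTransform g z‖ ≤ (∫ t, |g t|) / d := by
  refine (norm_integral_le_of_norm_le (hg.norm.div_const d)
    (Filter.Eventually.of_forall fun t => ?_)).trans_eq (integral_div _ _)
  rw [norm_mul, norm_div, Complex.norm_I, Complex.norm_real]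
  by_cases h0 : g t = 0
  · simp [h0]
  · rw [mul_one_div]
    gcongr
    exact h t h0

lemma differentiableAt_cauchyTransform {g : ℝ → ℝ} (hg : Integrable g) {z : ℂ} (hz : 0 < z.im) :
    DifferentiableAt ℂ (cauchyTransform g) z := by
  have hs : {w : ℂ | z.im / 2 < w.im} ∈ 𝓝 z :=
    (isOpen_lt continuous_const Complex.continuous_im).mem_nhds (by simp; linarith)
  have hmeas : ∀ w : ℂ, AEStronglyMeasurable
      (fun t : ℝ => (g t : ℂ) * (Complex.I / (w - t))) volume := fun w =>
    hg.ofReal.aestronglyMeasurable.mul (Measurable.aestronglyMeasurable (by fun_prop))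
  have key := hasDerivAt_integral_of_dominated_loc_of_deriv_le (μ := volume) (𝕜 := ℂ)
    (F := fun w t => (g t : ℂ) * (Complex.I / (w - t)))
    (F' := fun w t => (g t : ℂ) * (-Complex.I / (w - t) ^ 2))
    (bound := fun t => |g t| * (1 / (z.im / 2) ^ 2)) (x₀ := z) hs
    (Filter.Eventually.of_forall hmeas) (integrable_cauchyKernel hg hz)
    (hg.ofReal.aestronglyMeasurable.mul (Measurable.aestronglyMeasurable (by fun_prop)))
    (Filter.Eventually.of_forall fun t w hw => ?_) (hg.norm.mul_const _)
    (Filter.Eventually.of_forall fun t w hw => ?_)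
  · exact key.2.differentiableAt
  · rw [norm_mul, norm_div, norm_neg, Complex.norm_I, Complex.norm_real, norm_pow]
    have hw' : z.im / 2 < w.im := hw
    have h2 : z.im / 2 ≤ ‖w - t‖ := hw'.le.trans (im_le_norm_sub_ofReal w t)
    have h3 : (z.im / 2) ^ 2 ≤ ‖w - t‖ ^ 2 := by gcongr
    rw [Real.norm_eq_abs]
    gcongr
  · have hw' : z.im / 2 < w.im := hw
    have hne : w - t ≠ 0 := by
      intro h0
      have := im_le_norm_sub_ofReal w t
      rw [h0, norm_zero] at this
      linarith
    have h1 := (((hasDerivAt_id w).sub_const (t : ℂ)).fun_inv hne).const_mul Complex.I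
    have h2 := h1.const_mul (g t : ℂ)
    simp only [id] at h2
    refine (h2.congr_of_eventuallyEq (Filter.Eventually.of_forall fun y => ?_)).congr_deriv ?_
    · simp [div_eq_mul_inv]
    · ring

lemma poissonInt_nonneg {g : ℝ → ℝ} (h0 : ∀ t, 0 ≤ g t) {ε : ℝ} (hε : 0 < ε) (x : ℝ) :
    0 ≤ poissonInt ε g x :=
  integral_nonneg fun t => mul_nonneg (h0 t) (by positivity)

lemma integrable_poissonKernel {g : ℝ → ℝ} (hg : Integrable g) {ε : ℝ} (hε : 0 < ε) (x : ℝ) :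
    Integrable fun t => g t * (ε / ((x - t) ^ 2 + ε ^ 2)) := by
  refine hg.mul_bdd (c := 1 / ε) (Measurable.aestronglyMeasurable (by fun_prop))
    (Filter.Eventually.of_forall fun t => ?_)
  rw [Real.norm_eq_abs, abs_of_nonneg (by positivity),
    div_le_div_iff₀ (by positivity) hε]
  nlinarith [sq_nonneg (x - t)]

lemma poissonInt_pos {g : ℝ → ℝ} (hg : Integrable g) (h0 : ∀ t, 0 ≤ g t)
    (hne : ¬ g =ᵐ[volume] 0) {ε : ℝ} (hε : 0 < ε) (x : ℝ) : 0 < poissonInt ε g x := by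
  refine lt_of_le_of_ne (poissonInt_nonneg h0 hε x) fun h => hne ?_
  have h1 := (integral_eq_zero_iff_of_nonneg
    (fun t => mul_nonneg (h0 t) (by positivity)) (integrable_poissonKernel hg hε x)).1 h.symm
  filter_upwards [h1] with t ht
  have h2 : ε / ((x - t) ^ 2 + ε ^ 2) ≠ 0 := by positivity
  simpa [h2] using ht

lemma cauchyTransform_re_pos {g : ℝ → ℝ} (hg : Integrable g) (h0 : ∀ t, 0 ≤ g t)
    (hne : ¬ g =ᵐ[volume] 0) {z : ℂ} (hz : 0 < z.im) : 0 < (cauchyTransform g z).re := by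
  have h := (cauchyTransform_re_im hg z.re hz).1
  rw [Complex.re_add_im] at h
  rw [h]
  exact poissonInt_pos hg h0 hne hz z.re

lemma norm_integral_cauchyTransform_rpow_le {p : ℝ} (hp : 1 < p) {g : ℝ → ℝ} (hg : Integrable g)
    (h0 : ∀ t, 0 ≤ g t) (hne : ¬ g =ᵐ[volume] 0) {T : ℝ} (hT : 0 < T)
    (hsupp : ∀ t, g t ≠ 0 → |t| ≤ T) {ε : ℝ} (hε : 0 < ε) {m : ℝ} (hm : 1 ≤ m) :
    ‖∫ x in (-(T + m))..(T + m), cauchyTransform g (x + ε * Complex.I) ^ (p : ℂ)‖ ≤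
      (2 * T + 4) * (∫ t, |g t|) ^ p * m ^ (1 - p) := by
  have hm0 : 0 < m := by linarith
  have hp0 : 0 < p := by linarith
  set M := ∫ t, |g t| with hM
  have hM0 : 0 ≤ M := integral_nonneg fun t => abs_nonneg _
  set G : ℂ → ℂ := fun z => cauchyTransform g z ^ (p : ℂ) with hG
  have hdiff : DifferentiableOn ℂ G {z | 0 < z.im} := by
    intro z hz
    refine ((differentiableAt_cauchyTransform hg hz).cpow_const ?_).differentiableWithinAt
    exact Or.inl (cauchyTransform_re_pos hg h0 hne hz)
  have hGle : ∀ z : ℂ, (∀ t, g t ≠ 0 → m ≤ ‖z - t‖) → 0 < z.im → ‖G z‖ ≤ (M / m) ^ p := by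
    intro z hz hz'
    have hne0 : cauchyTransform g z ≠ 0 := by
      intro h
      have := cauchyTransform_re_pos hg h0 hne hz'
      rw [h] at this
      simp at this
    rw [hG]
    simp only
    rw [Complex.norm_cpow_real]
    exact Real.rpow_le_rpow (norm_nonneg _) (norm_cauchyTransform_le hg hm0 hz) hp0.le
  have hrect := Complex.integral_boundary_rect_eq_zero_of_differentiableOn G
    (⟨-(T + m), ε⟩ : ℂ) (⟨T + m, ε + m⟩ : ℂ) (hdiff.mono fun z hz => by
      have h1 := hz.2
      simp only [mem_preimage] at h1
      rw [uIcc_of_le (by linarith)] at h1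
      exact lt_of_lt_of_le hε h1.1)
  simp only at hrect
  have hside : ∀ s : ℝ, |s| = T + m →
      ‖∫ y in ε..(ε + m), G (s + y * Complex.I)‖ ≤ (M / m) ^ p * m := by
    intro s hs
    have := intervalIntegral.norm_integral_le_of_norm_le_const (a := ε) (b := ε + m)
      (f := fun y : ℝ => G (s + y * Complex.I)) (C := (M / m) ^ p) fun y hy => by
        rw [uIoc_of_le (by linarith)] at hy
        refine hGle _ (fun t ht => ?_) (by simpa using hε.trans hy.1)
        have h1 := Complex.abs_re_le_norm ((s : ℂ) + y * Complex.I - t)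
        simp at h1
        have h2 := hsupp t ht
        have h3 := abs_sub_abs_le_abs_sub s t
        linarith
    rwa [add_sub_cancel_left, abs_of_pos hm0] at this
  have htop : ‖∫ x in (-(T + m))..(T + m), G (x + ((ε + m : ℝ) : ℂ) * Complex.I)‖ ≤
      (M / m) ^ p * (2 * (T + m)) := by
    have := intervalIntegral.norm_integral_le_of_norm_le_const (a := -(T + m)) (b := T + m)
      (f := fun x : ℝ => G (x + ((ε + m : ℝ) : ℂ) * Complex.I)) (C := (M / m) ^ p) fun y hy => by
        refine hGle _ (fun t ht => ?_) (by simp; linarith)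
        refine le_trans ?_ (im_le_norm_sub_ofReal _ t)
        simp
        linarith
    rwa [show T + m - -(T + m) = 2 * (T + m) by ring, abs_of_pos (by linarith)] at this
  have hr := hside (T + m) (abs_of_pos (by linarith))
  have hl := hside (-(T + m)) (by rw [abs_neg, abs_of_pos (by linarith)])
  set J := ∫ x in (-(T + m))..(T + m), G (x + (ε : ℂ) * Complex.I) with hJ
  set J1 := ∫ x in (-(T + m))..(T + m), G (x + ((ε + m : ℝ) : ℂ) * Complex.I)
  set J2 := ∫ y in ε..(ε + m), G (((T + m : ℝ) : ℂ) + y * Complex.I)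
  set J3 := ∫ y in ε..(ε + m), G (((-(T + m) : ℝ) : ℂ) + y * Complex.I)
  have heq : J = J1 - Complex.I • J2 + Complex.I • J3 := by
    linear_combination hrect
  have hb : ‖J‖ ≤ (M / m) ^ p * (2 * (T + m)) + (M / m) ^ p * m + (M / m) ^ p * m := by
    rw [heq]
    refine (norm_add_le _ _).trans (add_le_add ((norm_sub_le _ _).trans (add_le_add htop ?_)) ?_)
    · rwa [norm_smul, Complex.norm_I, one_mul]
    · rwa [norm_smul, Complex.norm_I, one_mul]
  refine hb.trans ?_
  rw [Real.div_rpow hM0 hm0.le, Real.rpow_sub hm0, Real.rpow_one]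
  have h1 : M ^ p / m ^ p * (2 * (T + m)) + M ^ p / m ^ p * m + M ^ p / m ^ p * m =
    M ^ p / m ^ p * (2 * T + 4 * m) := by ring
  have h2 : (2 * T + 4) * M ^ p * (m / m ^ p) = M ^ p / m ^ p * (2 * T * m + 4 * m) := by ring
  rw [h1, h2]
  have : 2 * T ≤ 2 * T * m := by nlinarith
  gcongr

lemma lintegral_mul_rpow_le {p : ℝ} (hp : 1 < p) {g k : ℝ → ENNReal} (hg : Measurable g)
    (hk : Measurable k) :
    (∫⁻ t, g t * k t) ^ p ≤ (∫⁻ t, k t) ^ (p - 1) * ∫⁻ t, g t ^ p * k t := by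
  have hp0 : 0 < p := by linarith
  have hpq := Real.HolderConjugate.conjExponent hp
  set q := p.conjExponent with hq
  have hq0 : 0 < q := hpq.symm.pos
  have hsum : 1 / p + 1 / q = 1 := by simpa using hpq.inv_add_inv_eq_one
  have h := ENNReal.lintegral_mul_le_Lp_mul_Lq volume hpq
    (f := fun t => g t * k t ^ (1 / p)) (g := fun t => k t ^ (1 / q)) (by fun_prop) (by fun_prop)
  have e1 : ∀ t, ((fun t => g t * k t ^ (1 / p)) * fun t => k t ^ (1 / q)) t = g t * k t := by
    intro t
    simp only [Pi.mul_apply]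
    rw [mul_assoc, ← ENNReal.rpow_add_of_nonneg _ _ (by positivity) (by positivity), hsum,
      ENNReal.rpow_one]
  have e2 : ∀ t, (g t * k t ^ (1 / p)) ^ p = g t ^ p * k t := by
    intro t
    rw [ENNReal.mul_rpow_of_nonneg _ _ hp0.le, ← ENNReal.rpow_mul, one_div_mul_cancel hp0.ne',
      ENNReal.rpow_one]
  have e3 : ∀ t, (k t ^ (1 / q)) ^ q = k t := by
    intro t
    rw [← ENNReal.rpow_mul, one_div_mul_cancel hq0.ne', ENNReal.rpow_one]
  rw [lintegral_congr e1] at h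
  simp only [e2, e3] at h
  have h2 := ENNReal.rpow_le_rpow h hp0.le
  refine h2.trans_eq ?_
  rw [ENNReal.mul_rpow_of_nonneg _ _ hp0.le, ← ENNReal.rpow_mul, ← ENNReal.rpow_mul,
    one_div_mul_cancel hp0.ne', ENNReal.rpow_one, mul_comm]
  congr 2
  have : 1 / q = 1 - 1 / p := by linarith
  rw [this]
  field_simp

lemma lintegral_poissonKernel {ε : ℝ} (hε : 0 < ε) :
    ∫⁻ s : ℝ, ENNReal.ofReal (ε / (s ^ 2 + ε ^ 2)) = ENNReal.ofReal Real.pi := by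
  have h1 : ∀ s : ℝ, ε / (s ^ 2 + ε ^ 2) = ε⁻¹ * (1 + (s / ε) ^ 2)⁻¹ := by
    intro s
    field_simp
    ring
  have hi : Integrable fun s : ℝ => ε⁻¹ * (1 + (s / ε) ^ 2)⁻¹ :=
    (integrable_inv_one_add_sq.comp_div hε.ne').const_mul _
  simp only [h1]
  rw [← ofReal_integral_eq_lintegral_ofReal hi (Filter.Eventually.of_forall fun s => by positivity),
    integral_const_mul, Measure.integral_comp_div (fun s : ℝ => (1 + s ^ 2)⁻¹) ε,
    integral_univ_inv_one_add_sq, abs_of_pos hε, smul_eq_mul, inv_mul_cancel_left₀ hε.ne']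

lemma lintegral_poissonInt_rpow_le {p : ℝ} (hp : 1 < p) {g : ℝ → ℝ} (hg : Integrable g)
    (hgm : Measurable g) (h0 : ∀ t, 0 ≤ g t) {ε : ℝ} (hε : 0 < ε) :
    ∫⁻ x, ENNReal.ofReal (poissonInt ε g x ^ p) ≤
      ENNReal.ofReal Real.pi ^ p * ∫⁻ t, ENNReal.ofReal (g t ^ p) := by
  have hp0 : 0 < p := by linarith
  have h1 : ∀ x, ENNReal.ofReal (poissonInt ε g x ^ p) ≤ ENNReal.ofReal Real.pi ^ (p - 1) *
      ∫⁻ t, ENNReal.ofReal (g t ^ p) * ENNReal.ofReal (ε / ((x - t) ^ 2 + ε ^ 2)) := by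
    intro x
    rw [← ENNReal.ofReal_rpow_of_nonneg (poissonInt_nonneg h0 hε x) hp0.le, poissonInt,
      ofReal_integral_eq_lintegral_ofReal (integrable_poissonKernel hg hε x)
        (Filter.Eventually.of_forall fun t => mul_nonneg (h0 t) (by positivity))]
    have h2 := lintegral_mul_rpow_le hp (g := fun t => ENNReal.ofReal (g t))
      (k := fun t => ENNReal.ofReal (ε / ((x - t) ^ 2 + ε ^ 2))) (by fun_prop) (by fun_prop)
    rw [lintegral_sub_left_eq_self
      (fun s : ℝ => ENNReal.ofReal (ε / (s ^ 2 + ε ^ 2))) x, lintegral_poissonKernel hε] at h2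
    simp only [ENNReal.ofReal_mul (h0 _)]
    simpa only [ENNReal.ofReal_rpow_of_nonneg (h0 _) hp0.le] using h2
  refine (lintegral_mono h1).trans ?_
  rw [lintegral_const_mul' _ _ (ENNReal.rpow_ne_top_of_nonneg (by linarith) ENNReal.ofReal_ne_top),
    lintegral_lintegral_swap (Measurable.aemeasurable (by fun_prop))]
  have h2 : ∀ t, ∫⁻ x, ENNReal.ofReal (g t ^ p) * ENNReal.ofReal (ε / ((x - t) ^ 2 + ε ^ 2)) =
      ENNReal.ofReal (g t ^ p) * ENNReal.ofReal Real.pi := by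
    intro t
    rw [lintegral_const_mul' _ _ ENNReal.ofReal_ne_top, lintegral_sub_right_eq_self
      (fun s : ℝ => ENNReal.ofReal (ε / (s ^ 2 + ε ^ 2))) t, lintegral_poissonKernel hε]
  simp only [h2]
  rw [lintegral_mul_const' _ _ ENNReal.ofReal_ne_top, mul_comm (lintegral _ _), ← mul_assoc]
  gcongr
  nth_rw 2 [← ENNReal.rpow_one (ENNReal.ofReal Real.pi)]
  rw [← ENNReal.rpow_add_of_nonneg _ _ (by linarith) (by norm_num)]
  simp

lemma continuous_cauchyTransform_line {g : ℝ → ℝ} (hg : Integrable g) {ε : ℝ} (hε : 0 < ε) :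
    Continuous fun x : ℝ => cauchyTransform g (x + ε * Complex.I) := by
  refine continuous_iff_continuousAt.2 fun x => ?_
  have h1 : ContinuousAt (cauchyTransform g) ((x : ℂ) + ε * Complex.I) :=
    (differentiableAt_cauchyTransform hg (by simpa using hε)).continuousAt
  exact ContinuousAt.comp (f := fun x : ℝ => (x : ℂ) + ε * Complex.I) h1 (by fun_prop)

lemma continuous_poissonInt {g : ℝ → ℝ} (hg : Integrable g) {ε : ℝ} (hε : 0 < ε) :
    Continuous (poissonInt ε g) :=
  (Complex.continuous_re.comp (continuous_cauchyTransform_line hg hε)).congr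
    fun x => (cauchyTransform_re_im hg x hε).1

lemma continuous_conjPoissonInt {g : ℝ → ℝ} (hg : Integrable g) {ε : ℝ} (hε : 0 < ε) :
    Continuous (conjPoissonInt ε g) :=
  (Complex.continuous_im.comp (continuous_cauchyTransform_line hg hε)).congr
    fun x => (cauchyTransform_re_im hg x hε).2

lemma exists_lintegral_conjPoissonInt_rpow_le {p : ℝ} (hp : 1 < p) (hp2 : p ≤ 2) :
    ∃ C : ℝ, 0 ≤ C ∧ ∀ ε : ℝ, 0 < ε → ∀ T : ℝ, 0 < T → ∀ g : ℝ → ℝ, Measurable g →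
      Integrable g → (∀ t, 0 ≤ g t) → (∀ t, g t ≠ 0 → |t| ≤ T) →
      ∫⁻ x, ENNReal.ofReal (|conjPoissonInt ε g x| ^ p) ≤
        ENNReal.ofReal C * ∫⁻ t, ENNReal.ofReal (g t ^ p) := by
  have hp0 : 0 < p := by linarith
  obtain ⟨A, B, hA, hB, hAB⟩ := exists_abs_im_rpow_le hp hp2
  refine ⟨A * Real.pi ^ p, by positivity, fun ε hε T hT g hgm hg h0 hsupp => ?_⟩
  by_cases hne : g =ᵐ[volume] 0
  · have : ∀ x, conjPoissonInt ε g x = 0 := by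
      intro x
      rw [conjPoissonInt]
      refine integral_eq_zero_of_ae ?_
      filter_upwards [hne] with t ht
      simp [ht]
    simp [this, Real.zero_rpow hp0.ne']
  set M := ∫ t, |g t|
  have hcF := continuous_cauchyTransform_line hg hε
  have hcu := continuous_poissonInt hg hε
  have hcv := continuous_conjPoissonInt hg hε
  have hcG : Continuous fun x : ℝ => cauchyTransform g (x + ε * Complex.I) ^ (p : ℂ) :=
    hcF.cpow continuous_const fun x =>
      Or.inl (cauchyTransform_re_pos hg h0 hne (by simpa using hε))
  have hcvp : Continuous fun x => |conjPoissonInt ε g x| ^ p :=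
    hcv.abs.rpow_const fun x => Or.inr hp0.le
  have hcup : Continuous fun x => poissonInt ε g x ^ p := hcu.rpow_const fun x => Or.inr hp0.le
  have hbound : ∀ m : ℝ, 1 ≤ m →
      ∫⁻ x in Ioc (-(T + m)) (T + m), ENNReal.ofReal (|conjPoissonInt ε g x| ^ p) ≤
        ENNReal.ofReal (A * Real.pi ^ p) * (∫⁻ t, ENNReal.ofReal (g t ^ p)) +
          ENNReal.ofReal (B * ((2 * T + 4) * M ^ p * m ^ (1 - p))) := by
    intro m hm
    have hle : -(T + m) ≤ T + m := by linarith
    have hint : ∫ x in (-(T + m))..(T + m), |conjPoissonInt ε g x| ^ p ≤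
        A * (∫ x in (-(T + m))..(T + m), poissonInt ε g x ^ p) +
          B * ((2 * T + 4) * M ^ p * m ^ (1 - p)) := by
      have h1 : ∫ x in (-(T + m))..(T + m), |conjPoissonInt ε g x| ^ p ≤
          ∫ x in (-(T + m))..(T + m), (A * poissonInt ε g x ^ p -
            B * (cauchyTransform g (x + ε * Complex.I) ^ (p : ℂ)).re) := by
        refine intervalIntegral.integral_mono_on hle (hcvp.intervalIntegrable _ _)
          (Continuous.intervalIntegrable (by fun_prop) _ _) fun x _ => ?_
        have := hAB (cauchyTransform g (x + ε * Complex.I))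
          (cauchyTransform_re_pos hg h0 hne (by simpa using hε))
        rwa [(cauchyTransform_re_im hg x hε).1, (cauchyTransform_re_im hg x hε).2] at this
      rw [intervalIntegral.integral_sub (Continuous.intervalIntegrable (by fun_prop) _ _)
        (Continuous.intervalIntegrable (by fun_prop) _ _), intervalIntegral.integral_const_mul,
        intervalIntegral.integral_const_mul] at h1
      have h2 := Complex.reCLM.intervalIntegral_comp_comm
        (hcG.intervalIntegrable (μ := volume) (-(T + m)) (T + m))
      simp only [Complex.reCLM_apply] at h2
      rw [h2] at h1
      have h3 := norm_integral_cauchyTransform_rpow_le hp hg h0 hne hT hsupp hε hm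
      have h4 := (neg_le_abs _).trans ((Complex.abs_re_le_norm
        (∫ x in (-(T + m))..(T + m), cauchyTransform g (x + ε * Complex.I) ^ (p : ℂ))).trans h3)
      have h5 := mul_le_mul_of_nonneg_left h4 hB
      linarith
    have hconv : ∀ φ : ℝ → ℝ, Continuous φ → (∀ x, 0 ≤ φ x) →
        ENNReal.ofReal (∫ x in (-(T + m))..(T + m), φ x) =
          ∫⁻ x in Ioc (-(T + m)) (T + m), ENNReal.ofReal (φ x) := by
      intro φ hφ hφ0
      rw [intervalIntegral.integral_of_le hle, ofReal_integral_eq_lintegral_ofReal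
        ((hφ.intervalIntegrable (μ := volume) _ _).1) (Filter.Eventually.of_forall hφ0)]
    rw [← hconv _ hcvp fun x => by positivity]
    refine (ENNReal.ofReal_le_ofReal hint).trans (ENNReal.ofReal_add_le.trans ?_)
    gcongr
    rw [ENNReal.ofReal_mul hA, ENNReal.ofReal_mul hA, hconv _ hcup fun x =>
      Real.rpow_nonneg (poissonInt_nonneg h0 hε x) _, mul_assoc]
    gcongr
    refine (setLIntegral_le_lintegral _ _).trans
      ((lintegral_poissonInt_rpow_le hp hg hgm h0 hε).trans_eq ?_)
    rw [ENNReal.ofReal_rpow_of_nonneg Real.pi_pos.le hp0.le]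
  have hcast : Tendsto (fun j : ℕ => (j : ℝ) + 1) atTop atTop :=
    tendsto_atTop_add_const_right _ _ tendsto_natCast_atTop_atTop
  have hTc : Tendsto (fun j : ℕ => T + ((j : ℝ) + 1)) atTop atTop :=
    tendsto_atTop_add_const_left _ _ hcast
  have hcover : AECover volume atTop fun j : ℕ => Ioc (-(T + ((j : ℝ) + 1))) (T + ((j : ℝ) + 1)) :=
    aecover_Ioc (tendsto_neg_atTop_atBot.comp hTc) hTc
  have hlim := hcover.lintegral_tendsto_of_countably_generated
    (f := fun x => ENNReal.ofReal (|conjPoissonInt ε g x| ^ p))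
    (hcvp.measurable.ennreal_ofReal.aemeasurable)
  have hη : Tendsto (fun j : ℕ => ENNReal.ofReal
      (B * ((2 * T + 4) * M ^ p * ((j : ℝ) + 1) ^ (1 - p)))) atTop (𝓝 0) := by
    have h1 : Tendsto (fun m : ℝ => m ^ (1 - p)) atTop (𝓝 0) := by
      simpa using tendsto_rpow_neg_atTop (y := p - 1) (by linarith)
    have h2 := ((h1.comp hcast).const_mul ((2 * T + 4) * M ^ p)).const_mul B
    simpa using ENNReal.tendsto_ofReal h2
  have hr := hη.const_add (ENNReal.ofReal (A * Real.pi ^ p) * ∫⁻ t, ENNReal.ofReal (g t ^ p))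
  rw [add_zero] at hr
  exact le_of_tendsto_of_tendsto' hlim hr fun j => hbound _ (by simp)

lemma eLpNorm_ofReal_eq {p : ℝ} (hp : 0 < p) (f : ℝ → ℝ) (μ : Measure ℝ) :
    eLpNorm f (ENNReal.ofReal p) μ = (∫⁻ x, ENNReal.ofReal (|f x| ^ p) ∂μ) ^ (1 / p) := by
  rw [eLpNorm_eq_lintegral_rpow_enorm_toReal (by simpa using hp) ENNReal.ofReal_ne_top,
    ENNReal.toReal_ofReal hp.le]
  congr 1
  refine lintegral_congr fun x => ?_
  rw [Real.enorm_eq_ofReal_abs, ENNReal.ofReal_rpow_of_nonneg (abs_nonneg _) hp.le]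

lemma integrable_conjPoissonKernel {g : ℝ → ℝ} (hg : Integrable g) {ε : ℝ} (hε : 0 < ε) (x : ℝ) :
    Integrable fun t => g t * ((x - t) / ((x - t) ^ 2 + ε ^ 2)) := by
  refine hg.mul_bdd (c := 1 / ε) (Measurable.aestronglyMeasurable (by fun_prop))
    (Filter.Eventually.of_forall fun t => ?_)
  rw [norm_div, Real.norm_eq_abs, Real.norm_eq_abs,
    abs_of_pos (by positivity : 0 < (x - t) ^ 2 + ε ^ 2), div_le_div_iff₀ (by positivity) hε, ← sq_abs]
  nlinarith [sq_nonneg (|x - t| - ε), abs_nonneg (x - t)]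

lemma exists_eLpNorm_conjPoissonInt_le {p : ℝ} (hp : 1 < p) (hp2 : p ≤ 2) :
    ∃ C : ℝ, 0 ≤ C ∧ ∀ ε : ℝ, 0 < ε → ∀ T : ℝ, 0 < T → ∀ g : ℝ → ℝ, Measurable g →
      Integrable g → (∀ t, g t ≠ 0 → |t| ≤ T) →
      eLpNorm (conjPoissonInt ε g) (ENNReal.ofReal p) volume ≤
        ENNReal.ofReal C * eLpNorm g (ENNReal.ofReal p) volume := by
  have hp0 : 0 < p := by linarith
  obtain ⟨C, hC, hmain⟩ := exists_lintegral_conjPoissonInt_rpow_le hp hp2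
  refine ⟨C ^ (1 / p) + C ^ (1 / p), by positivity, fun ε hε T hT g hgm hg hsupp => ?_⟩
  have hpart : ∀ φ : ℝ → ℝ, Measurable φ → Integrable φ → (∀ t, 0 ≤ φ t) → (∀ t, φ t ≤ |g t|) →
      eLpNorm (conjPoissonInt ε φ) (ENNReal.ofReal p) volume ≤
        ENNReal.ofReal (C ^ (1 / p)) * eLpNorm g (ENNReal.ofReal p) volume := by
    intro φ hφm hφ hφ0 hφg
    have h := hmain ε hε T hT φ hφm hφ hφ0 fun t ht => hsupp t fun h0 => ht
      (le_antisymm (by simpa [h0] using hφg t) (hφ0 t))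
    rw [eLpNorm_ofReal_eq hp0, eLpNorm_ofReal_eq hp0, ← ENNReal.ofReal_rpow_of_nonneg hC
      (by positivity), ← ENNReal.mul_rpow_of_nonneg _ _ (by positivity)]
    refine ENNReal.rpow_le_rpow (h.trans ?_) (by positivity)
    gcongr with t
    · exact hφ0 t
    · exact hφg t
  have e : conjPoissonInt ε g = conjPoissonInt ε (fun t => max (g t) 0) -
      conjPoissonInt ε (fun t => max (-g t) 0) := by
    funext x
    rw [Pi.sub_apply, conjPoissonInt, conjPoissonInt, conjPoissonInt,
      ← integral_sub (integrable_conjPoissonKernel hg.pos_part hε x)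
        (integrable_conjPoissonKernel hg.neg_part hε x)]
    refine integral_congr_ae (Filter.Eventually.of_forall fun t => ?_)
    simp only
    rw [← sub_mul, max_zero_sub_max_neg_zero_eq_self]
  rw [e]
  refine (eLpNorm_sub_le (continuous_conjPoissonInt hg.pos_part hε).aestronglyMeasurable
    (continuous_conjPoissonInt hg.neg_part hε).aestronglyMeasurable
    (by simpa using hp.le)).trans ?_
  rw [ENNReal.ofReal_add (by positivity) (by positivity), add_mul]
  exact add_le_add
    (hpart _ (by fun_prop) hg.pos_part (fun t => le_max_right _ _)
      fun t => max_le (le_abs_self _) (abs_nonneg _))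
    (hpart _ (by fun_prop) hg.neg_part (fun t => le_max_right _ _)
      fun t => max_le (neg_le_abs _) (abs_nonneg _))

/-! ### Boundedness of the truncated partial sum operators -/

lemma integrable_mul_hermiteFun {f : ℝ → ℝ} (hf : Integrable f) (k : ℕ) :
    Integrable fun y => f y * hermiteFun k y :=
  hf.mul_bdd (c := 5 * (k + 1)) (continuous_hermiteFun k).aestronglyMeasurable
    (Filter.Eventually.of_forall fun y => abs_hermiteFun_le k y)

lemma continuous_hermitePartialSum (n : ℕ) (f : ℝ → ℝ) : Continuous (hermitePartialSum n f) :=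
  continuous_finsetSum _ fun k _ => continuous_const.mul (continuous_hermiteFun k)

lemma exists_abs_hermitePartialSum_le (n : ℕ) (f : ℝ → ℝ) :
    ∃ B : ℝ, 0 ≤ B ∧ ∀ x, |hermitePartialSum n f x| ≤ B := by
  refine ⟨∑ k ∈ Finset.range (n + 1), |∫ y : ℝ, f y * hermiteFun k y| * (5 * (k + 1)),
    by positivity, fun x => ?_⟩
  refine (Finset.abs_sum_le_sum_abs _ _).trans (Finset.sum_le_sum fun k _ => ?_)
  rw [abs_mul]
  gcongr
  exact abs_hermiteFun_le k x

lemma hermitePartialSum_eq_integral {f : ℝ → ℝ} (hf : Integrable f) (n : ℕ) (x : ℝ) :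
    hermitePartialSum n f x =
      ∫ y, f y * ∑ k ∈ Finset.range (n + 1), hermiteFun k x * hermiteFun k y := by
  simp only [Finset.mul_sum]
  rw [integral_finsetSum]
  · refine Finset.sum_congr rfl fun k _ => ?_
    rw [← integral_mul_const]
    exact integral_congr_ae (Filter.Eventually.of_forall fun y => by ring)
  · intro k _
    exact ((integrable_mul_hermiteFun hf k).const_mul (hermiteFun k x)).congr
      (Filter.Eventually.of_forall fun y => by ring)

lemma integral_hermitePartialSum_mul {g : ℝ → ℝ} (f : ℝ → ℝ) (hg : Integrable g) (n : ℕ) :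
    ∫ x, hermitePartialSum n f x * g x = ∑ k ∈ Finset.range (n + 1),
      (∫ y, f y * hermiteFun k y) * ∫ y, g y * hermiteFun k y := by
  simp only [hermitePartialSum, Finset.sum_mul]
  rw [integral_finsetSum]
  · refine Finset.sum_congr rfl fun k _ => ?_
    rw [← integral_const_mul]
    exact integral_congr_ae (Filter.Eventually.of_forall fun y => by ring)
  · intro k _
    exact ((integrable_mul_hermiteFun hg k).const_mul (∫ y, f y * hermiteFun k y)).congr
      (Filter.Eventually.of_forall fun y => by ring)

/-- The partial sum operator with its kernel regularised near the diagonal. -/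
noncomputable def hermiteRegularizedSum (n : ℕ) (ε : ℝ) (f : ℝ → ℝ) (x : ℝ) : ℝ :=
  √(2 * (n + 1)) / 2 *
    (hermiteFun (n + 1) x * conjPoissonInt ε (fun y => f y * hermiteFun n y) x -
      hermiteFun n x * conjPoissonInt ε (fun y => f y * hermiteFun (n + 1) y) x)

lemma hermiteRegularizedSum_eq_integral {f : ℝ → ℝ} (hf : Integrable f) (n : ℕ) {ε : ℝ}
    (hε : 0 < ε) (x : ℝ) :
    hermiteRegularizedSum n ε f x =
      ∫ y, (f y * ∑ k ∈ Finset.range (n + 1), hermiteFun k x * hermiteFun k y) *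
        ((x - y) ^ 2 / ((x - y) ^ 2 + ε ^ 2)) := by
  rw [hermiteRegularizedSum, conjPoissonInt, conjPoissonInt, ← integral_const_mul,
    ← integral_const_mul, ← integral_sub
      ((integrable_conjPoissonKernel (integrable_mul_hermiteFun hf n) hε x).const_mul _)
      ((integrable_conjPoissonKernel (integrable_mul_hermiteFun hf (n + 1)) hε x).const_mul _),
    ← integral_const_mul]
  refine integral_congr_ae (Filter.Eventually.of_forall fun y => ?_)
  have h := hermite_christoffelDarboux n x y
  simp only
  linear_combination -(f y * (x - y) / ((x - y) ^ 2 + ε ^ 2)) * h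

lemma integrable_mul_hermiteKernel {f : ℝ → ℝ} (hf : Integrable f) (n : ℕ) (x : ℝ) :
    Integrable fun y => f y * ∑ k ∈ Finset.range (n + 1), hermiteFun k x * hermiteFun k y := by
  simp only [Finset.mul_sum]
  refine integrable_finsetSum _ fun k _ => ?_
  exact ((integrable_mul_hermiteFun hf k).const_mul (hermiteFun k x)).congr
    (Filter.Eventually.of_forall fun y => by ring)

lemma tendsto_hermiteRegularizedSum {f : ℝ → ℝ} (hf : Integrable f) (n : ℕ) (x : ℝ) :
    Tendsto (fun j : ℕ => hermiteRegularizedSum n (1 / ((j : ℝ) + 1)) f x) atTop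
      (𝓝 (hermitePartialSum n f x)) := by
  have hi := integrable_mul_hermiteKernel hf n x
  rw [hermitePartialSum_eq_integral hf]
  have hε : ∀ j : ℕ, 0 < 1 / ((j : ℝ) + 1) := fun j => by positivity
  simp only [hermiteRegularizedSum_eq_integral hf n (hε _)]
  refine tendsto_integral_of_dominated_convergence _ (fun j => ?_) hi.norm (fun j => ?_) ?_
  · exact hi.aestronglyMeasurable.mul (Measurable.aestronglyMeasurable (by fun_prop))
  · refine Filter.Eventually.of_forall fun y => ?_
    rw [norm_mul]
    refine mul_le_of_le_one_right (norm_nonneg _) ?_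
    rw [Real.norm_eq_abs, abs_of_nonneg (by positivity)]
    exact div_le_one_of_le₀ (by nlinarith [hε j]) (by positivity)
  · filter_upwards [compl_mem_ae_iff.2 (measure_singleton x)] with y hy
    have hxy : x - y ≠ 0 := sub_ne_zero.2 fun h => hy h.symm
    have h1 := tendsto_one_div_add_atTop_nhds_zero_nat (𝕜 := ℝ)
    have h2 : Tendsto (fun j : ℕ => (x - y) ^ 2 / ((x - y) ^ 2 + (1 / ((j : ℝ) + 1)) ^ 2)) atTop
        (𝓝 ((x - y) ^ 2 / ((x - y) ^ 2 + 0 ^ 2))) :=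
      tendsto_const_nhds.div (tendsto_const_nhds.add (h1.pow 2)) (by positivity)
    have h3 : (x - y) ^ 2 / ((x - y) ^ 2 + 0 ^ 2) = 1 := by
      rw [zero_pow two_ne_zero, add_zero, div_self (by positivity)]
    rw [h3] at h2
    simpa using h2.const_mul (f y * ∑ k ∈ Finset.range (n + 1), hermiteFun k x * hermiteFun k y)

lemma exists_eLpNorm_hermitePartialSum_le_of_le_two {p : ℝ} (hp : 1 < p) (hp2 : p ≤ 2) :
    ∃ C : ℝ, 0 ≤ C ∧ ∀ T : ℝ, 0 < T → ∀ n : ℕ, 1 ≤ n → ∀ f : ℝ → ℝ, Measurable f →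
      Integrable f → (∀ x, x ∉ Ioo (-T) T → f x = 0) →
      eLpNorm (hermitePartialSum n f) (ENNReal.ofReal p) (volume.restrict (Ioo (-T) T)) ≤
        ENNReal.ofReal (C * (1 + T ^ 17 / √n)) * eLpNorm f (ENNReal.ofReal p) volume := by
  obtain ⟨C, hC, hmain⟩ := exists_eLpNorm_conjPoissonInt_le hp hp2
  refine ⟨2000 * C, by positivity, fun T hT n hn f hfm hf hsupp => ?_⟩
  obtain ⟨a, b, ha, hb, hna, hnb, hab⟩ := exists_hermiteFun_bounds T hT n hn
  set P := ENNReal.ofReal p with hP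
  set μ := volume.restrict (Ioo (-T) T) with hμ
  set c := √(2 * ((n : ℝ) + 1)) / 2 with hc
  have hc0 : 0 ≤ c := by positivity
  have hprod : ∀ (k l : ℕ) (α β : ℝ), 0 ≤ α → 0 ≤ β → (∀ x ∈ Ioo (-T) T, |hermiteFun k x| ≤ α) →
      (∀ x ∈ Ioo (-T) T, |hermiteFun l x| ≤ β) → ∀ ε : ℝ, 0 < ε →
      eLpNorm (fun x => hermiteFun k x * conjPoissonInt ε (fun y => f y * hermiteFun l y) x) P μ ≤
        ENNReal.ofReal (α * (C * β)) * eLpNorm f P volume := by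
    intro k l α β hα hβ hk hl ε hε
    have hg := integrable_mul_hermiteFun hf l
    have h1 : eLpNorm (fun x => hermiteFun k x *
        conjPoissonInt ε (fun y => f y * hermiteFun l y) x) P μ ≤ ENNReal.ofReal α *
        eLpNorm (conjPoissonInt ε (fun y => f y * hermiteFun l y)) P μ := by
      refine eLpNorm_le_mul_eLpNorm_of_ae_le_mul ?_ P
      filter_upwards [ae_restrict_mem measurableSet_Ioo] with x hx
      rw [norm_mul]
      gcongr
      exact hk x hx
    have h2 := hmain ε hε T hT (fun y => f y * hermiteFun l y)
      (hfm.mul (continuous_hermiteFun l).measurable) hg fun t ht => by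
        by_contra h
        refine ht ?_
        rw [hsupp t fun h' => h (abs_lt.2 h').le, zero_mul]
    have h3 : eLpNorm (fun y => f y * hermiteFun l y) P volume ≤
        ENNReal.ofReal β * eLpNorm f P volume := by
      refine eLpNorm_le_mul_eLpNorm_of_ae_le_mul (Filter.Eventually.of_forall fun y => ?_) P
      rw [norm_mul, mul_comm]
      by_cases hy : y ∈ Ioo (-T) T
      · gcongr
        exact hl y hy
      · simp [hsupp y hy]
    rw [ENNReal.ofReal_mul hα, ENNReal.ofReal_mul hC, mul_assoc, mul_assoc]
    refine h1.trans ?_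
    gcongr
    refine (eLpNorm_mono_measure _ Measure.restrict_le_self).trans (h2.trans ?_)
    gcongr
  have hcont : ∀ (k l : ℕ) (ε : ℝ), 0 < ε → Continuous
      (fun x => hermiteFun k x * conjPoissonInt ε (fun y => f y * hermiteFun l y) x) :=
    fun k l ε hε => (continuous_hermiteFun k).mul
      (continuous_conjPoissonInt (integrable_mul_hermiteFun hf l) hε)
  have hreg : ∀ ε : ℝ, 0 < ε → eLpNorm (hermiteRegularizedSum n ε f) P μ ≤
      ENNReal.ofReal (2000 * C * (1 + T ^ 17 / √n)) * eLpNorm f P volume := by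
    intro ε hε
    have h1 : eLpNorm (hermiteRegularizedSum n ε f) P μ ≤ ENNReal.ofReal c *
        eLpNorm ((fun x => hermiteFun (n + 1) x *
          conjPoissonInt ε (fun y => f y * hermiteFun n y) x) - fun x => hermiteFun n x *
          conjPoissonInt ε (fun y => f y * hermiteFun (n + 1) y) x) P μ := by
      refine eLpNorm_le_mul_eLpNorm_of_ae_le_mul (Filter.Eventually.of_forall fun x => ?_) P
      rw [hermiteRegularizedSum, norm_mul, Real.norm_of_nonneg hc0, Pi.sub_apply]
    have h2 := eLpNorm_sub_le (μ := μ) (p := P) (hcont (n + 1) n ε hε).aestronglyMeasurable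
      (hcont n (n + 1) ε hε).aestronglyMeasurable (by simpa [hP] using hp.le)
    have h3 := hprod (n + 1) n b a hb ha hnb hna ε hε
    have h4 := hprod n (n + 1) a b ha hb hna hnb ε hε
    have h5 := h1.trans (mul_le_mul_right (h2.trans (add_le_add h3 h4)) (ENNReal.ofReal c))
    refine h5.trans ?_
    rw [← add_mul, ← mul_assoc, ← ENNReal.ofReal_add (by positivity) (by positivity),
      ← ENNReal.ofReal_mul hc0]
    refine mul_le_mul_left (ENNReal.ofReal_le_ofReal ?_) _
    have h6 := mul_le_mul_of_nonneg_left hab hC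
    nlinarith
  refine (Lp.eLpNorm_lim_le_liminf_eLpNorm
    (f := fun j : ℕ => hermiteRegularizedSum n (1 / ((j : ℝ) + 1)) f) (fun j => ?_) _
    (Filter.Eventually.of_forall fun x => tendsto_hermiteRegularizedSum hf n x)).trans ?_
  · have hj : 0 < 1 / ((j : ℝ) + 1) := by positivity
    exact (continuous_const.mul ((hcont (n + 1) n _ hj).sub
      (hcont n (n + 1) _ hj))).aestronglyMeasurable
  · refine (liminf_le_liminf (Filter.Eventually.of_forall fun j : ℕ =>
      hreg (1 / ((j : ℝ) + 1)) (by positivity))).trans_eq ?_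
    exact liminf_const _

lemma eLpNorm_hermitePartialSum_le_of_dual {p q : ℝ} (hpq : p.HolderConjugate q) {T : ℝ} {n : ℕ}
    {K : ENNReal}
    (h : ∀ f : ℝ → ℝ, Measurable f → Integrable f → (∀ x, x ∉ Ioo (-T) T → f x = 0) →
      eLpNorm (hermitePartialSum n f) (ENNReal.ofReal p) (volume.restrict (Ioo (-T) T)) ≤
        K * eLpNorm f (ENNReal.ofReal p) volume)
    {f : ℝ → ℝ} (hfm : Measurable f) (hf : Integrable f) (hsupp : ∀ x, x ∉ Ioo (-T) T → f x = 0) :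
    eLpNorm (hermitePartialSum n f) (ENNReal.ofReal q) (volume.restrict (Ioo (-T) T)) ≤
      K * eLpNorm f (ENNReal.ofReal q) volume := by
  have hp0 := hpq.pos
  have hq0 := hpq.symm.pos
  have hq1 := hpq.symm.lt
  set u := hermitePartialSum n f with hu
  have huc : Continuous u := continuous_hermitePartialSum n f
  obtain ⟨B, hB, huB⟩ := exists_abs_hermitePartialSum_le n f
  set μ := volume.restrict (Ioo (-T) T) with hμ
  set g : ℝ → ℝ := (Ioo (-T) T).indicator fun x => SignType.sign (u x) * |u x| ^ (q - 1) with hg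
  have hgabs : ∀ x ∈ Ioo (-T) T, |g x| = |u x| ^ (q - 1) := by
    intro x hx
    rw [hg, indicator_of_mem hx, abs_mul, abs_of_nonneg (a := |u x| ^ (q - 1)) (by positivity)]
    rcases eq_or_ne (u x) 0 with h0 | h0
    · simp [h0, Real.zero_rpow (by linarith : q - 1 ≠ 0)]
    · rcases lt_or_gt_of_ne h0 with h1 | h1 <;> simp [h1]
  have hug : ∀ x ∈ Ioo (-T) T, u x * g x = |u x| ^ q := by
    intro x hx
    rw [hg, indicator_of_mem hx, ← mul_assoc, mul_comm (u x), sign_mul_self]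
    rcases eq_or_ne (u x) 0 with h0 | h0
    · simp [h0, Real.zero_rpow hq0.ne']
    · nth_rw 1 [← Real.rpow_one |u x|]
      rw [← Real.rpow_add (abs_pos.2 h0)]
      congr 1
      ring
  have hgm : Measurable g := by
    refine Measurable.indicator ?_ measurableSet_Ioo
    have hs : Measurable fun x => ((SignType.sign (u x) : SignType) : ℝ) := by
      have : (fun x => ((SignType.sign (u x) : SignType) : ℝ)) =
          fun x => if 0 < u x then (1 : ℝ) else if u x < 0 then -1 else 0 := by
        funext x
        rw [sign_apply]
        split_ifs <;> simp
      rw [this]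
      exact Measurable.ite (measurableSet_lt measurable_const huc.measurable) measurable_const
        (Measurable.ite (measurableSet_lt huc.measurable measurable_const) measurable_const
          measurable_const)
    exact hs.mul (huc.measurable.abs.pow_const _)
  have hg0 : ∀ x, x ∉ Ioo (-T) T → g x = 0 := fun x hx => indicator_of_notMem hx _
  have hgi : Integrable g := by
    have h1 : IntegrableOn g (Ioo (-T) T) := by
      refine Measure.integrableOn_of_bounded (M := B ^ (q - 1)) measure_Ioo_lt_top.ne
        hgm.aestronglyMeasurable ?_
      filter_upwards [ae_restrict_mem measurableSet_Ioo] with x hx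
      rw [Real.norm_eq_abs, hgabs x hx]
      exact Real.rpow_le_rpow (abs_nonneg _) (huB x) (by linarith)
    exact (integrableOn_iff_integrable_of_support_subset fun x hx => by
      by_contra h'; exact hx (hg0 x h')).1 h1
  have hmain := h g hgm hgi hg0
  set X := ∫⁻ x, ENNReal.ofReal (|u x| ^ q) ∂μ with hX
  have hXtop : X ≠ ⊤ := by
    refine ne_top_of_le_ne_top (b := ENNReal.ofReal (B ^ q) * μ univ) ?_ ?_
    · refine ENNReal.mul_ne_top ENNReal.ofReal_ne_top ?_
      rw [hμ, Measure.restrict_apply_univ]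
      exact measure_Ioo_lt_top.ne
    · rw [← lintegral_const]
      exact lintegral_mono fun x => ENNReal.ofReal_le_ofReal
        (Real.rpow_le_rpow (abs_nonneg _) (huB x) hq0.le)
  have hgnorm : eLpNorm g (ENNReal.ofReal p) volume = X ^ (1 / p) := by
    rw [eLpNorm_ofReal_eq hp0, hX, hμ, ← lintegral_indicator measurableSet_Ioo]
    congr 1
    refine lintegral_congr fun x => ?_
    by_cases hx : x ∈ Ioo (-T) T
    · rw [indicator_of_mem hx, hgabs x hx, ← Real.rpow_mul (abs_nonneg _), hpq.symm.sub_one_mul_conj]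
    · rw [indicator_of_notMem hx, hg0 x hx]
      simp [Real.zero_rpow hp0.ne']
  have hXeq : X = ENNReal.ofReal (∫ x, f x * hermitePartialSum n g x) := by
    have h1 : ∫ x, f x * hermitePartialSum n g x = ∫ x, u x * g x := by
      rw [integral_hermitePartialSum_mul f hgi n]
      simp only [mul_comm (f _) (hermitePartialSum n g _)]
      rw [integral_hermitePartialSum_mul g hf n]
      exact Finset.sum_congr rfl fun k _ => mul_comm _ _
    have h2 : ∫ x, u x * g x = ∫ x, |u x| ^ q ∂μ := by
      rw [hμ, ← integral_indicator measurableSet_Ioo]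
      congr 1
      funext x
      by_cases hx : x ∈ Ioo (-T) T
      · rw [indicator_of_mem hx, hug x hx]
      · rw [indicator_of_notMem hx, hg0 x hx, mul_zero]
    rw [h1, h2, hX, ofReal_integral_eq_lintegral_ofReal _
      (Filter.Eventually.of_forall fun x => by positivity)]
    refine Measure.integrableOn_of_bounded (M := B ^ q) measure_Ioo_lt_top.ne
      (huc.abs.rpow_const fun x => Or.inr hq0.le).aestronglyMeasurable
      (Filter.Eventually.of_forall fun x => ?_)
    rw [Real.norm_of_nonneg (by positivity)]
    exact Real.rpow_le_rpow (abs_nonneg _) (huB x) hq0.le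
  have hHolder : X ≤ eLpNorm f (ENNReal.ofReal q) volume *
      eLpNorm (hermitePartialSum n g) (ENNReal.ofReal p) μ := by
    have h1 : X ≤ ∫⁻ x, ENNReal.ofReal |f x| * ENNReal.ofReal |hermitePartialSum n g x| ∂μ := by
      rw [hXeq]
      have h2 : ∫ x, f x * hermitePartialSum n g x = ∫ x, f x * hermitePartialSum n g x ∂μ := by
        rw [hμ, setIntegral_eq_integral_of_forall_compl_eq_zero fun x hx => by
          rw [hsupp x hx, zero_mul]]
      rw [h2]
      refine (ENNReal.ofReal_le_ofReal (le_abs_self _)).trans ?_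
      rw [← Real.enorm_eq_ofReal_abs]
      refine (enorm_integral_le_lintegral_enorm _).trans_eq (lintegral_congr fun x => ?_)
      rw [enorm_mul, Real.enorm_eq_ofReal_abs, Real.enorm_eq_ofReal_abs]
    refine h1.trans ((ENNReal.lintegral_mul_le_Lp_mul_Lq μ hpq.symm
      (f := fun x => ENNReal.ofReal |f x|) (g := fun x => ENNReal.ofReal |hermitePartialSum n g x|)
      (by fun_prop) ((continuous_hermitePartialSum n g).abs.measurable.ennreal_ofReal.aemeasurable)
      ).trans ?_)
    rw [eLpNorm_ofReal_eq hq0, eLpNorm_ofReal_eq hp0]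
    simp only [ENNReal.ofReal_rpow_of_nonneg (abs_nonneg _) hq0.le,
      ENNReal.ofReal_rpow_of_nonneg (abs_nonneg _) hp0.le]
    gcongr
    exact Measure.restrict_le_self
  rw [eLpNorm_ofReal_eq hq0, ← hX]
  rcases eq_or_ne X 0 with h0 | h0
  · rw [h0, ENNReal.zero_rpow_of_pos (by positivity)]
    exact zero_le
  have hfin : X ≤ (K * eLpNorm f (ENNReal.ofReal q) volume) * X ^ (1 / p) := by
    refine hHolder.trans ((mul_le_mul_right hmain _).trans_eq ?_)
    rw [hgnorm]
    ring
  have hsplit : X = X ^ (1 / q) * X ^ (1 / p) := by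
    rw [← ENNReal.rpow_add _ _ h0 hXtop]
    have : 1 / q + 1 / p = 1 := by simpa [one_div] using hpq.symm.inv_add_inv_eq_one
    rw [this, ENNReal.rpow_one]
  refine (ENNReal.mul_le_mul_iff_left (c := X ^ (1 / p)) ?_ ?_).1 (by rwa [← hsplit])
  · exact (ENNReal.rpow_pos (pos_iff_ne_zero.2 h0) hXtop).ne'
  · exact ENNReal.rpow_ne_top_of_nonneg (by positivity) hXtop

/-! ### Decreasing rearrangements -/

lemma antitone_decRearrange (f : ℝ → ℝ) : Antitone (decRearrange f) := fun _ _ hst =>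
  sInf_le_sInf fun _ hl => ⟨hl.1, hl.2.trans (ENNReal.ofReal_le_ofReal hst)⟩

lemma le_decRearrange {f : ℝ → ℝ} {l : ENNReal} {t : ℝ}
    (h : ENNReal.ofReal t < volume {x : ℝ | l < ENNReal.ofReal |f x|}) :
    l ≤ decRearrange f t := by
  refine le_sInf fun m hm => ?_
  by_contra! hml
  exact (h.trans_le ((measure_mono fun x hx => hml.trans hx).trans hm.2)).false

lemma le_volume_ofReal_lt (m : ENNReal) :
    m ≤ volume.restrict (Ioi (0 : ℝ)) {t | ENNReal.ofReal t < m} := by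
  rw [Measure.restrict_apply (measurableSet_lt ENNReal.measurable_ofReal measurable_const)]
  rcases eq_or_ne m ⊤ with rfl | hm
  · simp
  · have h1 : Ioo 0 m.toReal ⊆ {t | ENNReal.ofReal t < m} ∩ Ioi 0 := fun t ht =>
      ⟨(ENNReal.ofReal_lt_iff_lt_toReal ht.1.le hm).2 ht.2, ht.1⟩
    refine le_trans ?_ (measure_mono h1)
    rw [Real.volume_Ioo, sub_zero, ENNReal.ofReal_toReal hm]

lemma lintegral_abs_rpow_le_lintegral_decRearrange_rpow {p : ℝ} (hp : 0 < p) {f : ℝ → ℝ}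
    (hf : Measurable f) :
    ∫⁻ x, ENNReal.ofReal (|f x| ^ p) ≤ ∫⁻ t in Ioi (0 : ℝ), decRearrange f t ^ p := by
  have hm : Measurable (decRearrange f) := (antitone_decRearrange f).measurable
  by_cases htop : ∫⁻ t in Ioi (0 : ℝ), decRearrange f t ^ p = ⊤
  · simp [htop]
  have hfin : ∀ᵐ t ∂volume.restrict (Ioi (0 : ℝ)), decRearrange f t ≠ ⊤ := by
    filter_upwards [ae_lt_top (hm.pow_const p) htop] with t ht h
    simp [h, hp] at ht
  have hr : ∫⁻ t in Ioi (0 : ℝ), decRearrange f t ^ p =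
      ∫⁻ t in Ioi (0 : ℝ), ENNReal.ofReal ((decRearrange f t).toReal ^ p) := by
    refine lintegral_congr_ae ?_
    filter_upwards [hfin] with t ht
    rw [← ENNReal.ofReal_rpow_of_nonneg ENNReal.toReal_nonneg hp.le, ENNReal.ofReal_toReal ht]
  rw [hr, lintegral_rpow_eq_lintegral_meas_lt_mul volume
      (Filter.Eventually.of_forall fun x => abs_nonneg (f x)) hf.abs.aemeasurable hp,
    lintegral_rpow_eq_lintegral_meas_le_mul _
      (Filter.Eventually.of_forall fun x => ENNReal.toReal_nonneg) hm.ennreal_toReal.aemeasurable hp]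
  refine mul_le_mul_right (setLIntegral_mono_ae' measurableSet_Ioi
    (Filter.Eventually.of_forall fun l hl => mul_le_mul_left ?_ _)) _
  refine (le_volume_ofReal_lt _).trans (measure_mono_ae ?_)
  filter_upwards [hfin] with t ht hlt
  refine (ENNReal.ofReal_le_iff_le_toReal ht).1 (le_decRearrange ?_)
  refine lt_of_lt_of_eq hlt (congrArg _ (Set.ext fun x => ?_))
  exact (ENNReal.ofReal_lt_ofReal_iff_of_nonneg (mem_Ioi.1 hl).le).symm

lemma decRearrange_le_two_mul_stieltjesT (f : ℝ → ℝ) {t : ℝ} (ht : 0 < t) :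
    decRearrange f t ≤ 2 * stieltjesT (decRearrange f) t := by
  have h1 : ∫⁻ _ in Ioc 0 t, decRearrange f t / ENNReal.ofReal (2 * t) ≤
      stieltjesT (decRearrange f) t := by
    refine (setLIntegral_mono' measurableSet_Ioc fun s hs => ?_).trans
      (lintegral_mono_set Ioc_subset_Ioi_self)
    exact ENNReal.div_le_div (antitone_decRearrange f hs.2)
      (ENNReal.ofReal_le_ofReal (by linarith [hs.2]))
  refine le_trans (le_of_eq ?_) (mul_le_mul_right h1 2)
  have h2 : ENNReal.ofReal t ≠ 0 := (ENNReal.ofReal_pos.2 ht).ne'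
  rw [setLIntegral_const, Real.volume_Ioc, sub_zero, ENNReal.ofReal_mul zero_le_two,
    ENNReal.ofReal_ofNat, mul_comm (_ / _), ← mul_assoc,
    ENNReal.mul_div_cancel (mul_ne_zero two_ne_zero h2)
      (ENNReal.mul_ne_top ENNReal.ofNat_ne_top ENNReal.ofReal_ne_top)]

lemma eLpNorm_le_two_mul_stieltjesT {p : ℝ} (hp : 0 < p) {f : ℝ → ℝ} (hf : Measurable f) :
    eLpNorm f (ENNReal.ofReal p) volume ≤
      2 * (∫⁻ t in Ioi (0 : ℝ), stieltjesT (decRearrange f) t ^ p) ^ (1 / p) := by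
  have h : ∫⁻ t in Ioi (0 : ℝ), decRearrange f t ^ p ≤
      2 ^ p * ∫⁻ t in Ioi (0 : ℝ), stieltjesT (decRearrange f) t ^ p := by
    rw [← lintegral_const_mul' _ _ (ENNReal.rpow_ne_top_of_nonneg hp.le ENNReal.ofNat_ne_top)]
    refine setLIntegral_mono' measurableSet_Ioi fun t ht => ?_
    rw [← ENNReal.mul_rpow_of_nonneg _ _ hp.le]
    exact ENNReal.rpow_le_rpow (decRearrange_le_two_mul_stieltjesT f ht) hp.le
  rw [eLpNorm_ofReal_eq hp]
  refine (ENNReal.rpow_le_rpow ((lintegral_abs_rpow_le_lintegral_decRearrange_rpow hp hf).trans h)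
    (by positivity)).trans_eq ?_
  rw [ENNReal.mul_rpow_of_nonneg _ _ (by positivity), ← ENNReal.rpow_mul,
    mul_one_div_cancel hp.ne', ENNReal.rpow_one]

/-! ### The truncated partial sums -/

lemma exists_eLpNorm_hermitePartialSum_le {p : ℝ} (hp : 1 < p) :
    ∃ C : ℝ, 0 ≤ C ∧ ∀ T : ℝ, 0 < T → ∀ n : ℕ, 1 ≤ n → ∀ f : ℝ → ℝ, Measurable f →
      Integrable f → (∀ x, x ∉ Ioo (-T) T → f x = 0) →
      eLpNorm (hermitePartialSum n f) (ENNReal.ofReal p) (volume.restrict (Ioo (-T) T)) ≤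
        ENNReal.ofReal (C * (1 + T ^ 17 / √n)) * eLpNorm f (ENNReal.ofReal p) volume := by
  rcases le_total p 2 with hp2 | hp2
  · exact exists_eLpNorm_hermitePartialSum_le_of_le_two hp hp2
  have hpq := (Real.HolderConjugate.conjExponent hp).symm
  have hq2 : p.conjExponent ≤ 2 := by
    rw [Real.conjExponent, div_le_iff₀ (by linarith)]
    linarith
  obtain ⟨C, hC, h⟩ := exists_eLpNorm_hermitePartialSum_le_of_le_two hpq.lt hq2
  exact ⟨C, hC, fun T hT n hn f hfm hf hsupp =>
    eLpNorm_hermitePartialSum_le_of_dual hpq (h T hT n hn) hfm hf hsupp⟩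


/-- **Control of the truncated partial Hermite sums by the Stieltjes transform of the
decreasing rearrangement:**
`‖S_n(fχ_T)‖_{L^p(−T,T)} ≤ C (1 + T^{17}/√n) ‖S f*‖_{L^p(0,∞)}`. -/
theorem hermitePartialSum_le_stieltjes (p : ℝ) (hp : 1 < p) :
    ∃ C : ℝ, 0 < C ∧ ∀ T : ℝ, 0 < T → ∀ n : ℕ, 1 ≤ n → ∀ f : ℝ → ℝ,
      Measurable f → IntegrableOn f (Set.Ioo (-T) T) →
      eLpNorm (hermitePartialSum n (Set.indicator (Set.Ioo (-T) T) f))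
          (ENNReal.ofReal p) (volume.restrict (Set.Ioo (-T) T))
        ≤ ENNReal.ofReal (C * (1 + T ^ 17 / Real.sqrt n)) *
          (∫⁻ t in Set.Ioi (0 : ℝ), stieltjesT (decRearrange f) t ^ p) ^ (1 / p) := by
  obtain ⟨C, hC, h⟩ := exists_eLpNorm_hermitePartialSum_le hp
  refine ⟨2 * C + 1, by positivity, fun T hT n hn f hfm hf => ?_⟩
  have hp0 : 0 < p := by linarith
  refine (h T hT n hn _ (hfm.indicator measurableSet_Ioo)
    (hf.integrable_indicator measurableSet_Ioo) fun x hx => indicator_of_notMem hx f).trans ?_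
  refine (mul_le_mul_right ((eLpNorm_indicator_le f).trans
    (eLpNorm_le_two_mul_stieltjesT hp0 hfm)) _).trans ?_
  rw [← mul_assoc]
  refine mul_le_mul_left ?_ _
  rw [← ENNReal.ofReal_ofNat 2, ← ENNReal.ofReal_mul (by positivity)]
  refine ENNReal.ofReal_le_ofReal ?_
  have : 0 ≤ 1 + T ^ 17 / √n := by positivity
  nlinarith
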